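/- Fix an integer d ≥ 3 and a real p with 1/(d-1) < p < 1. For every ε, b > 0 there exist R and c > 0 such that: if 𝒢 is a regular (b,d)-expander on n vertices with girth greater than 2R, and G ∼ 𝒢_p, then the probability that the symmetric difference E₂(G) △ E(C₁^{(2)}(G)) has more than εn elements is at most exp(−c n), and the probability that the symmetric difference V₂(G) △ V(C₁^{(2)}(G)) has more than εn elements is at most exp(−c n), where C₁^{(2)}(G) is the 2-core of a largest connected component of G. -/

import Mathlib

open scoped Classical symmDiff

noncomputable section

namespace Percolation

variable {V : Type} [Fintype V] [DecidableEq V]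

/-- The edge set of `G` as a finset. -/
noncomputable def edgeFinset' (G : SimpleGraph V) : Finset (Sym2 V) :=
  Finset.univ.filter (· ∈ G.edgeSet)

/-- Probability that bond percolation on `G` with parameter `p` produces a spanning
subgraph satisfying `P`. -/
noncomputable def percProb (G : SimpleGraph V) (p : ℝ) (P : SimpleGraph V → Prop) : ℝ :=
  ∑ s ∈ (edgeFinset' G).powerset,
    (p ^ s.card * (1 - p) ^ ((edgeFinset' G).card - s.card)) *
      (if P (SimpleGraph.fromEdgeSet (↑s)) then 1 else 0)

/-- Joint probability for two independent bond percolations on `G`. -/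
noncomputable def percProb2 (G : SimpleGraph V) (p₁ p₂ : ℝ)
    (P : SimpleGraph V → SimpleGraph V → Prop) : ℝ :=
  ∑ s ∈ (edgeFinset' G).powerset, ∑ t ∈ (edgeFinset' G).powerset,
    (p₁ ^ s.card * (1 - p₁) ^ ((edgeFinset' G).card - s.card)) *
    (p₂ ^ t.card * (1 - p₂) ^ ((edgeFinset' G).card - t.card)) *
      (if P (SimpleGraph.fromEdgeSet (↑s)) (SimpleGraph.fromEdgeSet (↑t)) then 1 else 0)

/-- Number of edges of `G` joining `S` to its complement. -/
noncomputable def cutCard (G : SimpleGraph V) (S : Finset V) : ℕ :=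
  ((edgeFinset' G).filter (fun e => ∃ x ∈ S, ∃ y, y ∉ S ∧ e = s(x, y))).card

/-- `G` is a `(b,d)`-expander: max degree at most `d`, and every vertex set of size at most
`n/2` has at least `b|S|` edges to its complement. -/
def IsExpander (G : SimpleGraph V) (b : ℝ) (d : ℕ) : Prop :=
  (∀ v, (G.neighborSet v).ncard ≤ d) ∧
  ∀ S : Finset V, (S.card : ℝ) ≤ Fintype.card V / 2 → b * S.card ≤ cutCard G S

/-- `G` is a regular `(b,d)`-expander. -/
def IsRegularExpander (G : SimpleGraph V) (b : ℝ) (d : ℕ) : Prop :=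
  IsExpander G b d ∧ ∀ v, (G.neighborSet v).ncard = d

/-- The vertices of the connected component `c` of `G`. -/
noncomputable def compVerts (G : SimpleGraph V) (c : G.ConnectedComponent) : Finset V :=
  Finset.univ.filter (fun v => G.connectedComponentMk v = c)

/-- The edges of the connected component `c` of `G`. -/
noncomputable def compEdges (G : SimpleGraph V) (c : G.ConnectedComponent) : Finset (Sym2 V) :=
  (edgeFinset' G).filter (fun e => ∀ v ∈ e, G.connectedComponentMk v = c)

/-- `c` is a largest connected component of `G`. -/
def IsLargestComp (G : SimpleGraph V) (c : G.ConnectedComponent) : Prop :=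
  ∀ c' : G.ConnectedComponent, (compVerts G c').card ≤ (compVerts G c).card

/-- The 2-core of the connected component `c` of `G` : the maximal subgraph of `G`
supported inside `c` all of whose vertices have degree at least 2. -/
noncomputable def twoCoreComp (G : SimpleGraph V) (c : G.ConnectedComponent) : SimpleGraph V :=
  sSup {H : SimpleGraph V | H ≤ G ∧ (∀ v ∈ H.support, G.connectedComponentMk v = c) ∧
    ∀ v ∈ H.support, 2 ≤ (H.neighborSet v).ncard}

/-- The event `A^R_{x,y}(H)`: the connected component of `y` in `H` with the edge `xy`
removed (if present) has at least `R` vertices. -/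
def eventA (H : SimpleGraph V) (R : ℕ) (x y : V) : Prop :=
  R ≤ (compVerts (H.deleteEdges {s(x, y)})
        ((H.deleteEdges {s(x, y)}).connectedComponentMk y)).card

/-- `E₁(H)`: edges `xy` of `H` such that `A^R_{x,y}` or `A^R_{y,x}` holds. -/
noncomputable def E1set (H : SimpleGraph V) (R : ℕ) : Finset (Sym2 V) :=
  (edgeFinset' H).filter (fun e => ∃ x y, e = s(x, y) ∧ (eventA H R x y ∨ eventA H R y x))

/-- `V₁(H)`: vertices `x` such that for some `y`, `xy ∈ E(H)` and `A^R_{x,y}` holds. -/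
noncomputable def V1set (H : SimpleGraph V) (R : ℕ) : Finset V :=
  Finset.univ.filter (fun x => ∃ y, H.Adj x y ∧ eventA H R x y)

/-- `E₂(H)`: edges `xy` of `H` such that both `A^R_{x,y}` and `A^R_{y,x}` hold. -/
noncomputable def E2set (H : SimpleGraph V) (R : ℕ) : Finset (Sym2 V) :=
  (edgeFinset' H).filter (fun e => ∃ x y, e = s(x, y) ∧ eventA H R x y ∧ eventA H R y x)

/-- `V₂(H)`: vertices incident to an edge of `E₂(H)`. -/
noncomputable def V2set (H : SimpleGraph V) (R : ℕ) : Finset V :=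
  Finset.univ.filter (fun x => ∃ e ∈ E2set H R, x ∈ e)

/-- `V̄₁(H)`: vertices `y` such that `A^R_{x,y}(H)` holds for some `x`. -/
noncomputable def Vbar1 (H : SimpleGraph V) (R : ℕ) : Finset V :=
  Finset.univ.filter (fun y => ∃ x, eventA H R x y)

/-- `S` is `k`-thick in `H`: a union of pairwise disjoint subsets, each of size at least
`k`, each inducing a connected subgraph of `H`. -/
def IsThick (H : SimpleGraph V) (k : ℕ) (S : Finset V) : Prop :=
  ∃ P : Finset (Finset V),
    (∀ T ∈ P, k ≤ T.card ∧ (H.induce (↑T : Set V)).Connected) ∧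
    (↑P : Set (Finset V)).PairwiseDisjoint id ∧ S = P.biUnion id

/-- `S` is a separator of `K`. -/
def IsSeparator {W : Type} [Fintype W] (K : SimpleGraph W) (S : Finset W) : Prop :=
  ∃ A B : Finset W, Disjoint A B ∧ Disjoint A S ∧ Disjoint B S ∧
    (∀ w, w ∈ A ∨ w ∈ B ∨ w ∈ S) ∧
    (∀ a ∈ A, ∀ b ∈ B, ¬ K.Adj a b) ∧
    3 * A.card ≤ 2 * Fintype.card W ∧ 3 * B.card ≤ 2 * Fintype.card W

/-!
Let `m = d - 1`. By the girth condition, the percolated branch below a dart of `G` is a percolated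
`m`-ary tree up to a fixed depth `k`, so each dart extends to depth `k` with the same probability
`survival m p k`, and the number of extending darts concentrates around its mean by the bounded
differences inequality. As `m * p > 1`, lowering `p` to a nearby `p'` decreases `survival m p k`
only slightly, uniformly in `k`.

Reveal the percolation at density `p` in two stages: first density `p'`, then a sprinkling that
brings the density up to `p`. The head of a dart that extends to depth `r ≤ k` in the first stage
lies in the thick set of the first stage, the set of vertices whose ball of radius `r` has more
than `r` elements. This set is covered by the balls around at most `n / (r + 1)` centers, so there
are few ways to cut it by few edges, and a union bound together with expansion shows that, up to
exponentially small probability, the sprinkled graph does not split it into two linear parts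
joined by few edges.

An edge of `E₂` outside the 2-core of the giant component either lies in another component or is a
bridge. The small components and the small sides of bridges then contain together only few thick
vertices, and a dart of `G` in the percolated graph that ends at a vertex which is not thick
extends to depth `k` at the density `p` but not at `p'`, which is rare. Conversely, both ends of
an edge of the 2-core reach a cycle, whose length exceeds `2 * R`, so `E₂` contains the 2-core.
-/

theorem exp_le_add_exp_sq (x : ℝ) : Real.exp x ≤ x + Real.exp (x ^ 2) := by
  have hsq := Real.add_one_le_exp (x ^ 2)
  rcases le_or_gt |x| 1 with h | h
  · have := (abs_le.1 (Real.abs_exp_sub_one_sub_id_le h)).2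
    linarith
  rcases lt_abs.1 h with h | h
  · have : Real.exp x ≤ Real.exp (x ^ 2) := Real.exp_le_exp.2 (by nlinarith)
    linarith
  · have : Real.exp x ≤ 1 := Real.exp_le_one_iff.2 (by linarith)
    nlinarith

theorem two_point_exp_le {p x y μ L : ℝ} (h0 : 0 ≤ p) (h1 : p ≤ 1) (hμ : μ = p * x + (1 - p) * y)
    (hxy : |x - y| ≤ L) :
    p * Real.exp (x - μ) + (1 - p) * Real.exp (y - μ) ≤ Real.exp (L ^ 2) := by
  have hsq : (x - y) ^ 2 ≤ L ^ 2 := sq_le_sq' (abs_le.1 hxy).1 (abs_le.1 hxy).2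
  have exp_le {q : ℝ} (hq : q ^ 2 ≤ 1) {z : ℝ} (hz : z = q * (x - y)) :
      Real.exp z ≤ z + Real.exp (L ^ 2) := by
    refine (exp_le_add_exp_sq z).trans (add_le_add le_rfl (Real.exp_le_exp.2 ?_))
    rw [hz, mul_pow]
    exact (mul_le_of_le_one_left (sq_nonneg _) hq).trans hsq
  calc p * Real.exp (x - μ) + (1 - p) * Real.exp (y - μ)
      ≤ p * (x - μ + Real.exp (L ^ 2)) + (1 - p) * (y - μ + Real.exp (L ^ 2)) := by
        have := sub_nonneg.2 h1
        gcongr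
        · exact exp_le (q := 1 - p) (by nlinarith) (by rw [hμ]; ring)
        · exact exp_le (q := -p) (by nlinarith) (by rw [hμ]; ring)
    _ = Real.exp (L ^ 2) := by rw [hμ]; ring

section RandomSubset

variable {α ι : Type*} {E : Finset α} {p q L : ℝ} {f g : Finset α → ℝ} {A B : Finset α}

/-- Expectation of `f` at the random subset of `E` retaining each element independently with
probability `p`. -/
def expect (E : Finset α) (p : ℝ) (f : Finset α → ℝ) : ℝ :=
  ∑ s ∈ E.powerset, (p ^ s.card * (1 - p) ^ (E.card - s.card)) * f s

/-- Probability that the random subset of `E` retaining each element independently with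
probability `p` satisfies `P`. -/
def prob (E : Finset α) (p : ℝ) (P : Finset α → Prop) : ℝ :=
  expect E p fun s ↦ if P s then 1 else 0

theorem expect_empty (p : ℝ) (f : Finset α → ℝ) : expect ∅ p f = f ∅ := by
  simp [expect]

theorem expect_add (E : Finset α) (p : ℝ) (f g : Finset α → ℝ) :
    expect E p (fun s ↦ f s + g s) = expect E p f + expect E p g := by
  simp [expect, mul_add, Finset.sum_add_distrib]

theorem expect_const_mul (E : Finset α) (p c : ℝ) (f : Finset α → ℝ) :
    expect E p (fun s ↦ c * f s) = c * expect E p f := by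
  simp only [expect, Finset.mul_sum]
  exact Finset.sum_congr rfl fun s _ ↦ by ring

theorem expect_sub (E : Finset α) (p : ℝ) (f g : Finset α → ℝ) :
    expect E p (fun s ↦ f s - g s) = expect E p f - expect E p g := by
  simp [expect, mul_sub, Finset.sum_sub_distrib]

theorem expect_sum (E : Finset α) (p : ℝ) (I : Finset ι) (f : ι → Finset α → ℝ) :
    expect E p (fun s ↦ ∑ i ∈ I, f i s) = ∑ i ∈ I, expect E p (f i) := by
  simp only [expect, Finset.mul_sum]
  exact Finset.sum_comm

theorem expect_mono (h0 : 0 ≤ p) (h1 : p ≤ 1) (h : ∀ s ⊆ E, f s ≤ g s) :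
    expect E p f ≤ expect E p g := by
  have : 0 ≤ 1 - p := sub_nonneg.2 h1
  exact Finset.sum_le_sum fun s hs ↦
    mul_le_mul_of_nonneg_left (h s (Finset.mem_powerset.1 hs)) (by positivity)

theorem expect_congr (h : ∀ s ⊆ E, f s = g s) : expect E p f = expect E p g :=
  Finset.sum_congr rfl fun s hs ↦ by rw [h s (Finset.mem_powerset.1 hs)]

theorem prob_mono {P Q : Finset α → Prop} (h0 : 0 ≤ p) (h1 : p ≤ 1)
    (h : ∀ s ⊆ E, P s → Q s) : prob E p P ≤ prob E p Q := by
  refine expect_mono h0 h1 fun s hs ↦ ?_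
  by_cases hP : P s
  · rw [if_pos hP, if_pos (h s hs hP)]
  · rw [if_neg hP]
    split_ifs <;> norm_num

theorem prob_le_expect {P : Finset α → Prop} (h0 : 0 ≤ p) (h1 : p ≤ 1)
    (hf : ∀ s ⊆ E, 0 ≤ f s) (h : ∀ s ⊆ E, P s → 1 ≤ f s) : prob E p P ≤ expect E p f := by
  refine expect_mono h0 h1 fun s hs ↦ ?_
  split_ifs with hP
  exacts [h s hs hP, hf s hs]

theorem prob_or_le (h0 : 0 ≤ p) (h1 : p ≤ 1) (P Q : Finset α → Prop) :
    prob E p (fun s ↦ P s ∨ Q s) ≤ prob E p P + prob E p Q := by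
  simp only [prob]
  rw [← expect_add]
  refine expect_mono h0 h1 fun s _ ↦ ?_
  by_cases P s <;> by_cases Q s <;> simp [*]

theorem prob_exists_le (h0 : 0 ≤ p) (h1 : p ≤ 1) (I : Finset ι) (P : ι → Finset α → Prop) :
    prob E p (fun s ↦ ∃ i ∈ I, P i s) ≤ ∑ i ∈ I, prob E p (P i) := by
  simp only [prob]
  rw [← expect_sum]
  have nonneg (s : Finset α) (i : ι) : (0 : ℝ) ≤ if P i s then 1 else 0 := by
    split_ifs <;> norm_num
  refine prob_le_expect h0 h1 (fun s _ ↦ Finset.sum_nonneg fun i _ ↦ nonneg s i) ?_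
  rintro s - ⟨i, hi, hPi⟩
  exact (if_pos hPi).ge.trans (Finset.single_le_sum (fun i _ ↦ nonneg s i) hi)

theorem expect_insert [DecidableEq α] {a : α} (ha : a ∉ E) (p : ℝ) (f : Finset α → ℝ) :
    expect (insert a E) p f =
      p * expect E p (fun s ↦ f (insert a s)) + (1 - p) * expect E p f := by
  unfold expect
  rw [Finset.sum_powerset_insert ha, add_comm, Finset.mul_sum, Finset.mul_sum]
  congr 1 <;> refine Finset.sum_congr rfl fun s hs ↦ ?_
  · have has : a ∉ s := fun h ↦ ha (Finset.mem_powerset.1 hs h)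
    rw [Finset.card_insert_of_notMem has, Finset.card_insert_of_notMem ha,
      Nat.add_sub_add_right, pow_succ]
    ring
  · have hcard := Finset.card_le_card (Finset.mem_powerset.1 hs)
    rw [Finset.card_insert_of_notMem ha, Nat.succ_sub hcard, pow_succ]
    ring

theorem expect_const (E : Finset α) (p c : ℝ) : expect E p (fun _ ↦ c) = c := by
  induction E using Finset.induction_on with
  | empty => simp [expect_empty]
  | insert a E ha ih => rw [expect_insert ha, ih]; ring

variable [DecidableEq α]

theorem expect_union (E : Finset α) (p q : ℝ) (f : Finset α → ℝ) :
    expect E (p + q - p * q) f = expect E p (fun s ↦ expect E q (fun t ↦ f (s ∪ t))) := by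
  induction E using Finset.induction_on generalizing f with
  | empty => simp [expect_empty]
  | insert a E ha ih =>
    simp only [expect_insert ha, ih, expect_add, expect_const_mul, Finset.insert_union,
      Finset.union_insert, Finset.insert_idem]
    ring

/-- `f s` is determined by `s ∩ A`. -/
def IsDeterminedBy (f : Finset α → ℝ) (A : Finset α) : Prop :=
  ∀ s, ∀ a ∉ A, f (insert a s) = f s

theorem IsDeterminedBy.comp_insert (hf : IsDeterminedBy f A) (a : α) :
    IsDeterminedBy (fun s ↦ f (insert a s)) A := fun s x hx ↦ by
  simp only [Finset.insert_comm a x, hf _ x hx]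

theorem IsDeterminedBy.mono (hf : IsDeterminedBy f A) (hAB : A ⊆ B) : IsDeterminedBy f B :=
  fun s a ha ↦ hf s a fun h ↦ ha (hAB h)

theorem IsDeterminedBy.mul (hf : IsDeterminedBy f A) (hg : IsDeterminedBy g A) :
    IsDeterminedBy (fun s ↦ f s * g s) A := fun s a ha ↦ by
  simp only [hf s a ha, hg s a ha]

theorem IsDeterminedBy.const_sub (hf : IsDeterminedBy f A) (c : ℝ) :
    IsDeterminedBy (fun s ↦ c - f s) A := fun s a ha ↦ by
  simp only [hf s a ha]

theorem IsDeterminedBy.prod {I : Finset ι} {f : ι → Finset α → ℝ}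
    {A : ι → Finset α} (hf : ∀ i ∈ I, IsDeterminedBy (f i) (A i)) :
    IsDeterminedBy (fun s ↦ ∏ i ∈ I, f i s) (I.biUnion A) := fun s a ha ↦
  Finset.prod_congr rfl fun i hi ↦ hf i hi s a fun h ↦ ha (Finset.mem_biUnion.2 ⟨i, hi, h⟩)

theorem isDeterminedBy_mem (a : α) :
    IsDeterminedBy (fun s ↦ if a ∈ s then (1 : ℝ) else 0) {a} := fun s b hb ↦ by
  simp [Ne.symm (Finset.notMem_singleton.1 hb)]

theorem expect_mul_of_disjoint (E : Finset α) (p : ℝ) (hAB : Disjoint A B)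
    (hf : IsDeterminedBy f A) (hg : IsDeterminedBy g B) :
    expect E p (fun s ↦ f s * g s) = expect E p f * expect E p g := by
  induction E using Finset.induction_on generalizing f g with
  | empty => simp [expect_empty]
  | insert a E ha ih =>
    rw [expect_insert ha, expect_insert ha, expect_insert ha, ih hf hg,
      ih (hf.comp_insert a) (hg.comp_insert a)]
    by_cases haA : a ∈ A
    · simp only [hg _ a (Finset.disjoint_left.1 hAB haA)]
      ring
    · simp only [hf _ a haA]
      ring

theorem expect_prod_of_pairwiseDisjoint (E : Finset α) (p : ℝ) {I : Finset ι}
    {f : ι → Finset α → ℝ} {A : ι → Finset α} (hA : (I : Set ι).PairwiseDisjoint A)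
    (hf : ∀ i ∈ I, IsDeterminedBy (f i) (A i)) :
    expect E p (fun s ↦ ∏ i ∈ I, f i s) = ∏ i ∈ I, expect E p (f i) := by
  induction I using Finset.induction_on with
  | empty => simp [expect_const]
  | insert i I hi ih =>
    rw [Finset.coe_insert, Set.pairwiseDisjoint_insert_of_notMem (by simpa using hi)] at hA
    simp only [Finset.forall_mem_insert] at hf
    have hdisj : Disjoint (A i) (I.biUnion A) := (Finset.disjoint_biUnion_right ..).2 hA.2
    simp only [Finset.prod_insert hi]
    rw [expect_mul_of_disjoint E p hdisj hf.1 (.prod hf.2), ih hA.1 hf.2]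

theorem expect_mem {a : α} (ha : a ∈ E) (p : ℝ) :
    expect E p (fun s ↦ if a ∈ s then 1 else 0) = p := by
  obtain ⟨E', ha', rfl⟩ : ∃ E', a ∉ E' ∧ insert a E' = E :=
    ⟨E.erase a, Finset.notMem_erase a E, Finset.insert_erase ha⟩
  have : expect E' p (fun s ↦ if a ∈ s then (1 : ℝ) else 0) = expect E' p (fun _ ↦ 0) :=
    expect_congr fun s hs ↦ if_neg fun h ↦ ha' (hs h)
  simp [expect_insert ha', this, expect_const]

theorem prob_add_sub_mul_le {P Bad : Finset α → Prop} {u v : ℝ} (hp0 : 0 ≤ p) (hp1 : p ≤ 1)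
    (hq0 : 0 ≤ q) (hq1 : q ≤ 1) (hv : 0 ≤ v) (hbad : prob E p Bad ≤ u)
    (h : ∀ s ⊆ E, ¬ Bad s → prob E q (fun t ↦ P (s ∪ t)) ≤ v) :
    prob E (p + q - p * q) P ≤ u + v := by
  have prob_le_one (s : Finset α) : prob E q (fun t ↦ P (s ∪ t)) ≤ 1 := by
    rw [← expect_const E q 1]
    exact expect_mono hq0 hq1 fun t _ ↦ by split_ifs <;> norm_num
  calc prob E (p + q - p * q) P
      = expect E p (fun s ↦ prob E q fun t ↦ P (s ∪ t)) := expect_union ..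
    _ ≤ expect E p (fun s ↦ (if Bad s then 1 else 0) + v) := by
        refine expect_mono hp0 hp1 fun s hs ↦ ?_
        split_ifs with hs'
        · exact (prob_le_one s).trans (le_add_of_nonneg_right hv)
        · exact (h s hs hs').trans_eq (zero_add v).symm
    _ ≤ u + v := by
        rw [expect_add, expect_const]
        exact add_le_add hbad le_rfl

/-- Inserting one element changes `f` by at most `L`. -/
def HasBoundedDifferences (f : Finset α → ℝ) (L : ℝ) : Prop :=
  ∀ s a, |f (insert a s) - f s| ≤ L

theorem HasBoundedDifferences.comp_insert (hf : HasBoundedDifferences f L) (a : α) :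
    HasBoundedDifferences (fun s ↦ f (insert a s)) L := fun s x ↦ by
  simp only [Finset.insert_comm a x, hf (insert a s) x]

theorem HasBoundedDifferences.const_mul (hf : HasBoundedDifferences f L) (c : ℝ) :
    HasBoundedDifferences (fun s ↦ c * f s) (|c| * L) := fun s a ↦ by
  rw [← mul_sub, abs_mul]
  exact mul_le_mul_of_nonneg_left (hf s a) (abs_nonneg c)

theorem HasBoundedDifferences.abs_expect_sub_le (hf : HasBoundedDifferences f L) (h0 : 0 ≤ p)
    (h1 : p ≤ 1) (E : Finset α) (a : α) :
    |expect E p (fun s ↦ f (insert a s)) - expect E p f| ≤ L := by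
  rw [← expect_sub, abs_le, ← expect_const E p L, ← neg_one_mul, ← expect_const_mul]
  exact ⟨expect_mono h0 h1 fun s _ ↦ by simpa using (abs_le.1 (hf s a)).1,
    expect_mono h0 h1 fun s _ ↦ (abs_le.1 (hf s a)).2⟩

theorem HasBoundedDifferences.expect_exp_le (hf : HasBoundedDifferences f L) (h0 : 0 ≤ p)
    (h1 : p ≤ 1) (E : Finset α) :
    expect E p (fun s ↦ Real.exp (f s - expect E p f)) ≤ Real.exp (L ^ 2 * E.card) := by
  induction E using Finset.induction_on generalizing f with
  | empty => simp [expect_empty]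
  | insert a E ha ih =>
    set F₀ := expect E p f
    set F₁ := expect E p (fun s ↦ f (insert a s))
    set μ := expect (insert a E) p f
    have hμ : μ = p * F₁ + (1 - p) * F₀ := expect_insert ha p f
    have expect_exp_sub_le {g : Finset α → ℝ} (hg : HasBoundedDifferences g L) :
        expect E p (fun s ↦ Real.exp (g s - μ)) ≤
          Real.exp (expect E p g - μ) * Real.exp (L ^ 2 * E.card) := by
      calc expect E p (fun s ↦ Real.exp (g s - μ))
          = Real.exp (expect E p g - μ) * expect E p (fun s ↦ Real.exp (g s - expect E p g)) := by
            rw [← expect_const_mul]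
            exact expect_congr fun s _ ↦ by rw [← Real.exp_add]; ring_nf
        _ ≤ _ := mul_le_mul_of_nonneg_left (ih hg) (Real.exp_pos _).le
    calc expect (insert a E) p (fun s ↦ Real.exp (f s - μ))
        ≤ p * (Real.exp (F₁ - μ) * Real.exp (L ^ 2 * E.card)) +
            (1 - p) * (Real.exp (F₀ - μ) * Real.exp (L ^ 2 * E.card)) := by
          rw [expect_insert ha]
          have : 0 ≤ 1 - p := sub_nonneg.2 h1
          gcongr
          exacts [expect_exp_sub_le (hf.comp_insert a), expect_exp_sub_le hf]
      _ = (p * Real.exp (F₁ - μ) + (1 - p) * Real.exp (F₀ - μ)) * Real.exp (L ^ 2 * E.card) := by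
          ring
      _ ≤ Real.exp (L ^ 2) * Real.exp (L ^ 2 * E.card) :=
          mul_le_mul_of_nonneg_right
            (two_point_exp_le h0 h1 hμ (hf.abs_expect_sub_le h0 h1 E a)) (Real.exp_pos _).le
      _ = Real.exp (L ^ 2 * (insert a E).card) := by
          rw [← Real.exp_add, Finset.card_insert_of_notMem ha]
          push_cast
          ring_nf

theorem HasBoundedDifferences.prob_expect_add_le (hf : HasBoundedDifferences f L) (h0 : 0 ≤ p)
    (h1 : p ≤ 1) (hL : 0 < L) {m x : ℝ} (hm : 0 < m) (hE : E.card ≤ m) (hx : 0 ≤ x) :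
    prob E p (fun s ↦ expect E p f + x ≤ f s) ≤ Real.exp (-(x ^ 2 / (4 * L ^ 2 * m))) := by
  set l := x / (2 * L ^ 2 * m) with hl
  have hl0 : 0 ≤ l := by positivity
  have chernoff := (hf.const_mul l).expect_exp_le h0 h1 E
  rw [expect_const_mul, abs_of_nonneg hl0] at chernoff
  calc prob E p (fun s ↦ expect E p f + x ≤ f s)
      ≤ expect E p (fun s ↦ Real.exp (-(l * x)) * Real.exp (l * f s - l * expect E p f)) := by
        refine prob_le_expect h0 h1 (fun s _ ↦ by positivity) fun s _ hs ↦ ?_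
        rw [← Real.exp_add]
        exact Real.one_le_exp (by nlinarith)
    _ ≤ Real.exp (-(l * x)) * Real.exp ((l * L) ^ 2 * E.card) := by
        rw [expect_const_mul]
        gcongr
    _ ≤ Real.exp (-(l * x)) * Real.exp ((l * L) ^ 2 * m) := by gcongr
    _ = Real.exp (-(x ^ 2 / (4 * L ^ 2 * m))) := by
        rw [← Real.exp_add, hl]
        congr 1
        field_simp
        ring

theorem HasBoundedDifferences.prob_le_expect_sub (hf : HasBoundedDifferences f L) (h0 : 0 ≤ p)
    (h1 : p ≤ 1) (hL : 0 < L) {m x : ℝ} (hm : 0 < m) (hE : E.card ≤ m) (hx : 0 ≤ x) :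
    prob E p (fun s ↦ f s ≤ expect E p f - x) ≤ Real.exp (-(x ^ 2 / (4 * L ^ 2 * m))) := by
  have h := (hf.const_mul (-1)).prob_expect_add_le h0 h1 (by simpa using hL) hm hE hx
  rw [expect_const_mul, abs_neg, abs_one, one_mul] at h
  exact (prob_mono h0 h1 fun s _ hs ↦ by linarith).trans h

end RandomSubset

theorem prob_subset {α : Type*} {E A : Finset α} (hA : A ⊆ E) (p : ℝ) :
    prob E p (fun s ↦ A ⊆ s) = p ^ A.card := by
  calc prob E p (fun s ↦ A ⊆ s)
      = expect E p (fun s ↦ ∏ a ∈ A, if a ∈ s then (1 : ℝ) else 0) :=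
        expect_congr fun s _ ↦ by simp [Finset.prod_boole, Finset.subset_iff]
    _ = ∏ _ ∈ A, p := by
        rw [expect_prod_of_pairwiseDisjoint E p (A := fun a ↦ {a})
          (fun _ _ _ _ hab ↦ Finset.disjoint_singleton.2 hab) fun _ _ ↦ isDeterminedBy_mem _]
        exact Finset.prod_congr rfl fun _ ha ↦ expect_mem (hA ha) p
    _ = p ^ A.card := by simp

section Survival

/-- Probability that the percolated `m`-ary tree reaches depth `k`. -/
def survival (m : ℕ) (p : ℝ) : ℕ → ℝ
  | 0 => 1
  | k + 1 => 1 - (1 - p * survival m p k) ^ m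

variable {m : ℕ} {p : ℝ}

theorem survival_mem_Icc (m : ℕ) (hp : p ∈ Set.Icc 0 1) (k : ℕ) :
    survival m p k ∈ Set.Icc 0 1 := by
  induction k with
  | zero => simp [survival]
  | succ k ih =>
    have hmem := Set.Icc.one_sub_mem (unitInterval.mul_mem hp ih)
    exact Set.Icc.one_sub_mem ⟨pow_nonneg hmem.1 m, pow_le_one₀ hmem.1 hmem.2⟩

theorem one_sub_pow_mul_one_add_le_one {x : ℝ} (hx0 : 0 ≤ x) (hx1 : x ≤ 1) (m : ℕ) :
    (1 - x) ^ m * (1 + m * x) ≤ 1 := by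
  have := sub_nonneg.2 hx1
  calc (1 - x) ^ m * (1 + m * x) ≤ (1 - x) ^ m * (1 + x) ^ m := by
        gcongr
        exact one_add_mul_le_pow (by linarith) m
    _ = (1 - x ^ 2) ^ m := by rw [← mul_pow]; ring
    _ ≤ 1 := pow_le_one₀ (by nlinarith) (by nlinarith)

theorem exists_pos_le_survival (hmp : 1 < m * p) (h0 : 0 < p) (h1 : p < 1) :
    ∃ t₀ > 0, ∀ k, t₀ ≤ survival m p k := by
  have hmp0 : 0 < m * p := one_pos.trans hmp
  obtain ⟨t₀, ht₀⟩ : ∃ t₀, m * p * t₀ = m * p - 1 := ⟨_, mul_div_cancel₀ _ hmp0.ne'⟩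
  have ht0 : 0 < t₀ := by nlinarith
  have ht1 : t₀ < 1 := by nlinarith
  have step : (1 - p * t₀) ^ m ≤ 1 - t₀ := by
    have h := one_sub_pow_mul_one_add_le_one (x := p * t₀) (by positivity)
      (mul_le_one₀ h1.le ht0.le ht1.le) m
    rw [← mul_assoc, ht₀, add_sub_cancel] at h
    refine le_of_mul_le_mul_right (h.trans_eq ?_) hmp0
    linarith
  refine ⟨t₀, ht0, fun k ↦ ?_⟩
  induction k with
  | zero => exact ht1.le
  | succ k ih =>
    have hle := (unitInterval.mul_mem ⟨h0.le, h1.le⟩ (survival_mem_Icc m ⟨h0.le, h1.le⟩ k)).2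
    have : (1 - p * survival m p k) ^ m ≤ (1 - p * t₀) ^ m := by
      gcongr
    simp only [survival]
    linarith

theorem mul_one_sub_pow_lt (hm : 2 ≤ m) {l x : ℝ} (hl0 : 0 < l) (hl1 : l < 1) (hx0 : 0 < x)
    (hx1 : x ≤ 1) : l * (1 - (1 - x) ^ m) < 1 - (1 - l * x) ^ m := by
  have h := (strictConvexOn_pow hm).2 (Set.mem_Ici.2 zero_le_one)
    (Set.mem_Ici.2 (sub_nonneg.2 hx1)) (by linarith) (sub_pos.2 hl1) hl0 (by ring)
  simp only [smul_eq_mul, one_pow, mul_one] at h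
  rw [show 1 - l + l * (1 - x) = 1 - l * x by ring] at h
  linarith

theorem exists_pos_forall_mul_one_sub_pow_add_le (hm : 2 ≤ m) {x₀ l : ℝ} (hx₀ : 0 < x₀)
    (hl0 : 0 < l) (hl1 : l < 1) :
    ∃ γ > 0, ∀ x ∈ Set.Icc x₀ 1, l * (1 - (1 - x) ^ m) + γ ≤ 1 - (1 - l * x) ^ m := by
  rcases (Set.Icc x₀ 1).eq_empty_or_nonempty with hempty | hne
  · exact ⟨1, one_pos, by simp [hempty]⟩
  obtain ⟨u, hu, hmin⟩ := isCompact_Icc.exists_isMinOn hne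
    (f := fun x ↦ 1 - (1 - l * x) ^ m - l * (1 - (1 - x) ^ m)) (by fun_prop)
  refine ⟨_, sub_pos.2 (mul_one_sub_pow_lt hm hl0 hl1 (hx₀.trans_le hu.1) hu.2), fun x hx ↦ ?_⟩
  rw [add_comm, ← le_sub_iff_add_le]
  exact hmin hx

theorem one_sub_pow_sub_one_sub_pow_le {x y : ℝ} (hx : 0 ≤ x) (hxy : x ≤ y) (hy : y ≤ 1) (m : ℕ) :
    (1 - x) ^ m - (1 - y) ^ m ≤ m * (y - x) := by
  calc (1 - x) ^ m - (1 - y) ^ m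
      ≤ |1 - x - (1 - y)| * m * max |1 - x| |1 - y| ^ (m - 1) :=
        (le_abs_self _).trans (abs_pow_sub_pow_le ..)
    _ ≤ |1 - x - (1 - y)| * m * 1 := by
        gcongr
        refine pow_le_one₀ (by positivity) (max_le ?_ ?_) <;> rw [abs_le] <;> constructor <;>
          linarith
    _ = m * (y - x) := by
        rw [sub_sub_sub_cancel_left, abs_of_nonneg (sub_nonneg.2 hxy)]
        ring

/-- The gap in the concavity inequality absorbs the effect of lowering `p`. -/
theorem exists_lt_forall_mul_survival_le (hm : 2 ≤ m) (hmp : 1 < m * p) (h1 : p < 1) {l : ℝ}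
    (hl0 : 0 < l) (hl1 : l < 1) :
    ∃ p', 0 < p' ∧ p' < p ∧ ∀ k, l * survival m p k ≤ survival m p' k := by
  have hm0 : (0 : ℝ) < m := by positivity
  have h0 : 0 < p := pos_of_mul_pos_right (one_pos.trans hmp) hm0.le
  obtain ⟨t₀, ht₀, hsurv⟩ := exists_pos_le_survival hmp h0 h1
  obtain ⟨γ, hγ, hgap⟩ :=
    exists_pos_forall_mul_one_sub_pow_add_le hm (mul_pos h0 ht₀) hl0 hl1
  obtain ⟨p', hp', hp'p⟩ : ∃ p', max (p - γ / m) 0 < p' ∧ p' < p :=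
    exists_between (max_lt (sub_lt_self _ (by positivity)) h0)
  obtain ⟨hp'γ, hp'0⟩ := max_lt_iff.1 hp'
  have hγ' : m * (p - p') ≤ γ := by
    rw [← le_div_iff₀' hm0]
    linarith
  refine ⟨p', hp'0, hp'p, fun k ↦ ?_⟩
  induction k with
  | zero => simpa [survival] using hl1.le
  | succ k ih =>
    set t := survival m p k
    have ht : t ∈ Set.Icc 0 1 := survival_mem_Icc m ⟨h0.le, h1.le⟩ k
    have hlt : l * t ∈ Set.Icc 0 1 := unitInterval.mul_mem ⟨hl0.le, hl1.le⟩ ht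
    have hs := survival_mem_Icc m ⟨hp'0.le, (hp'p.trans h1).le⟩ k
    calc l * survival m p (k + 1) ≤ 1 - (1 - l * (p * t)) ^ m - γ :=
          le_sub_iff_add_le.2 (hgap _ ⟨by gcongr; exact hsurv k, mul_le_one₀ h1.le ht.1 ht.2⟩)
      _ ≤ 1 - (1 - p' * (l * t)) ^ m := by
          have h := one_sub_pow_sub_one_sub_pow_le (x := p' * (l * t)) (y := l * (p * t))
            (by have := hlt.1; positivity)
            (by nlinarith [mul_le_mul_of_nonneg_right hp'p.le hlt.1])
            (mul_le_one₀ hl1.le (mul_nonneg h0.le ht.1) (mul_le_one₀ h1.le ht.1 ht.2)) m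
          have : m * (l * (p * t) - p' * (l * t)) ≤ γ :=
            calc m * (l * (p * t) - p' * (l * t)) = m * (p - p') * (l * t) := by ring
              _ ≤ m * (p - p') := mul_le_of_le_one_right
                  (mul_nonneg hm0.le (sub_nonneg.2 hp'p.le)) hlt.2
              _ ≤ γ := hγ'
          linarith
      _ ≤ survival m p' (k + 1) := by
          have : p' * survival m p' k ≤ 1 := mul_le_one₀ (hp'p.trans h1).le hs.1 hs.2
          simp only [survival]
          gcongr

theorem exists_lt_forall_survival_sub_le (hm : 2 ≤ m) (hmp : 1 < m * p) (h1 : p < 1) {ε : ℝ}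
    (hε : 0 < ε) : ∃ p', 0 < p' ∧ p' < p ∧ ∀ k, survival m p k - survival m p' k ≤ ε := by
  obtain ⟨l, hl, hl1⟩ : ∃ l, max (1 - ε) 0 < l ∧ l < 1 :=
    exists_between (max_lt (sub_lt_self _ hε) one_pos)
  obtain ⟨hlε, hl0⟩ := max_lt_iff.1 hl
  obtain ⟨p', hp'0, hp'p, h⟩ := exists_lt_forall_mul_survival_le hm hmp h1 hl0 hl1
  refine ⟨p', hp'0, hp'p, fun k ↦ ?_⟩
  have := (survival_mem_Icc m ⟨(hp'0.trans hp'p).le, h1.le⟩ k).2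
  nlinarith [h k]

end Survival

section Girth

variable {V : Type*} {G : SimpleGraph V} {N : ℕ} {u v x y : V}

theorem eq_of_isPath_of_lt_egirth (hG : (N : ℕ∞) < G.egirth) {p q : G.Walk u v} (hp : p.IsPath)
    (hq : q.IsPath) (hN : p.length + q.length ≤ N) : p = q := by
  by_contra hne
  obtain ⟨w, -, -, c, hc, hlen⟩ := hp.exists_isCycle_length_le_add_of_ne hq hne
  have : N < c.length := by
    exact_mod_cast hG.trans_le (SimpleGraph.egirth_le_length hc)
  omega

theorem notMem_support_of_lt_egirth (hG : (N : ℕ∞) < G.egirth) (h : G.Adj x y) {q : G.Walk y u}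
    (hq : q.IsPath) (hx : q.snd ≠ x) (hN : q.length + 1 ≤ N) : x ∉ q.support := by
  intro hmem
  have htake : q.takeUntil x hmem = .cons h.symm .nil := by
    have hlen := q.length_takeUntil_le_length hmem
    exact eq_of_isPath_of_lt_egirth hG (hq.takeUntil hmem) (by simp [h.ne'])
      (by simp only [SimpleGraph.Walk.length_cons, SimpleGraph.Walk.length_nil]; omega)
  refine hx ?_
  have hsnd := SimpleGraph.Walk.snd_takeUntil h.ne q hmem
  rwa [htake, SimpleGraph.Walk.snd_cons, eq_comm] at hsnd

end Girth

section Branching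

variable {V : Type*} {G : SimpleGraph V} {s t : Finset (Sym2 V)} {k N : ℕ} {u x y z : V}

/-- There is a non-backtracking walk of length `k` along edges of `G` in `s` that starts at `y`
and whose first step does not go to `x`. -/
def Extends (G : SimpleGraph V) (s : Finset (Sym2 V)) : ℕ → V → V → Prop
  | 0, _, _ => True
  | k + 1, x, y => ∃ z, z ≠ x ∧ G.Adj y z ∧ s(y, z) ∈ s ∧ Extends G s k y z

theorem Extends.mono (hst : s ⊆ t) (h : Extends G s k x y) : Extends G t k x y := by
  induction k generalizing x y with
  | zero => trivial
  | succ k ih =>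
    obtain ⟨z, hzx, hyz, hs, h⟩ := h
    exact ⟨z, hzx, hyz, hst hs, ih h⟩

theorem Extends.exists_isPath (hG : (N : ℕ∞) < G.egirth) (hk : k + 1 ≤ N) (hxy : G.Adj x y)
    (h : Extends G s k x y) :
    ∃ (u : V) (q : G.Walk y u),
      q.IsPath ∧ q.length = k ∧ x ∉ q.support ∧ ∀ e ∈ q.edges, e ∈ s := by
  induction k generalizing x y with
  | zero => exact ⟨y, .nil, by simp, rfl, by simp [hxy.ne], by simp⟩
  | succ k ih =>
    obtain ⟨z, hzx, hyz, hs, h⟩ := h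
    obtain ⟨u, q, hq, hlen, hy, he⟩ := ih (by omega) hyz h
    have hpath : (SimpleGraph.Walk.cons hyz q).IsPath := hq.cons hy
    refine ⟨u, .cons hyz q, hpath, by simp [hlen], ?_, by simpa [hs] using he⟩
    exact notMem_support_of_lt_egirth hG hxy hpath (by simpa using hzx) (by simp; omega)

theorem extends_of_isPath {H : SimpleGraph V} (hH : H ≤ G) {q : H.Walk y u} (hq : q.IsPath)
    (hs : ∀ e ∈ q.edges, e ∈ s) (hx : q.snd ≠ x) (hk : k ≤ q.length) : Extends G s k x y := by
  induction q generalizing x k with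
  | nil =>
    obtain rfl : k = 0 := by simpa using hk
    trivial
  | @cons y z u h q ih =>
    cases k with
    | zero => trivial
    | succ k =>
      rw [SimpleGraph.Walk.cons_isPath_iff] at hq
      have hsnd : q.snd ≠ y := fun hy ↦ hq.2 (hy ▸ q.getVert_mem_support 1)
      exact ⟨z, by simpa using hx, hH h, hs _ (by simp),
        ih hq.1 (fun e he ↦ hs e (by simp [he])) hsnd (by simpa using hk)⟩

variable [Fintype V] [DecidableEq V]

/-- The edges on which `Extends G · k x y` depends. -/
def branchEdges (G : SimpleGraph V) : ℕ → V → V → Finset (Sym2 V)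
  | 0, _, _ => ∅
  | k + 1, x, y =>
    ((G.neighborFinset y).erase x).biUnion fun z ↦ insert s(y, z) (branchEdges G k y z)

theorem mem_branchEdges_succ {e : Sym2 V} : e ∈ branchEdges G (k + 1) x y ↔
    ∃ z, z ≠ x ∧ G.Adj y z ∧ e ∈ insert s(y, z) (branchEdges G k y z) := by
  simp only [branchEdges, Finset.mem_biUnion, Finset.mem_erase, SimpleGraph.mem_neighborFinset,
    and_assoc]

theorem extends_insert_iff {a : Sym2 V} (ha : a ∉ branchEdges G k x y) :
    Extends G (insert a s) k x y ↔ Extends G s k x y := by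
  induction k generalizing x y with
  | zero => exact Iff.rfl
  | succ k ih =>
    simp only [mem_branchEdges_succ, not_exists, not_and, Finset.mem_insert, not_or] at ha
    refine exists_congr fun z ↦ and_congr_right fun hzx ↦ and_congr_right fun hyz ↦ ?_
    obtain ⟨hne, hz⟩ := ha z hzx hyz
    rw [ih hz, Finset.mem_insert, or_iff_right (Ne.symm hne)]

theorem isDeterminedBy_extends (G : SimpleGraph V) (k : ℕ) (x y : V) :
    IsDeterminedBy (fun s ↦ if Extends G s k x y then (1 : ℝ) else 0) (branchEdges G k x y) :=
  fun s a ha ↦ by simp only [extends_insert_iff ha]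

theorem exists_isPath_of_mem_branchEdges (hG : (N : ℕ∞) < G.egirth) (hk : k + 2 ≤ N)
    (hyz : G.Adj y z) {e : Sym2 V} (he : e ∈ insert s(y, z) (branchEdges G k y z)) :
    ∃ (w u : V) (q : G.Walk y w) (h : G.Adj w u), (q.concat h).IsPath ∧ q.length ≤ k ∧
      e = s(w, u) ∧ (q.concat h).snd = z := by
  induction k generalizing y z with
  | zero =>
    obtain rfl : e = s(y, z) := by simpa [branchEdges] using he
    exact ⟨y, z, .nil, hyz, by simp [SimpleGraph.Walk.concat_nil, hyz.ne], by simp, rfl,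
      by simp [SimpleGraph.Walk.concat_nil]⟩
  | succ k ih =>
    rw [Finset.mem_insert, mem_branchEdges_succ] at he
    rcases he with rfl | ⟨z', hz', hzz', he⟩
    · exact ⟨y, z, .nil, hyz, by simp [SimpleGraph.Walk.concat_nil, hyz.ne], by simp, rfl,
        by simp [SimpleGraph.Walk.concat_nil]⟩
    obtain ⟨w, u, q, h, hp, hlen, rfl, hsnd⟩ := ih (by omega) hzz' he
    have hy := notMem_support_of_lt_egirth hG hyz hp (by rwa [hsnd]) (by simp; omega)
    exact ⟨w, u, .cons hyz q, h, by rw [SimpleGraph.Walk.concat_cons]; exact hp.cons hy,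
      by simpa using hlen, rfl, by simp [SimpleGraph.Walk.concat_cons]⟩

theorem disjoint_branchEdges (hG : (N : ℕ∞) < G.egirth) (hk : 2 * (k + 1) ≤ N) {z' : V}
    (hyz : G.Adj y z) (hyz' : G.Adj y z') (hne : z ≠ z') :
    Disjoint (insert s(y, z) (branchEdges G k y z)) (insert s(y, z') (branchEdges G k y z')) := by
  rw [Finset.disjoint_left]
  intro e he he'
  obtain ⟨w, u, q, h, hp, hlen, rfl, hsnd⟩ :=
    exists_isPath_of_mem_branchEdges hG (by omega) hyz he
  obtain ⟨w', u', q', h', hp', hlen', heq, hsnd'⟩ :=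
    exists_isPath_of_mem_branchEdges hG (by omega) hyz' he'
  rcases Sym2.eq_iff.1 heq with ⟨rfl, rfl⟩ | ⟨rfl, rfl⟩
  · have := eq_of_isPath_of_lt_egirth hG hp hp' (by simp; omega)
    exact hne (hsnd ▸ hsnd' ▸ congrArg _ this)
  · rw [SimpleGraph.Walk.concat_isPath_iff] at hp
    refine hp.2 ?_
    rw [eq_of_isPath_of_lt_egirth hG hp.1 hp' (by simp; omega)]
    simp [SimpleGraph.Walk.support_concat]

theorem notMem_branchEdges (hG : (N : ℕ∞) < G.egirth) (hk : k + 2 ≤ N) (hyz : G.Adj y z) :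
    s(y, z) ∉ branchEdges G k y z := by
  cases k with
  | zero => simp [branchEdges]
  | succ k =>
    rw [mem_branchEdges_succ]
    rintro ⟨z', hz', hzz', he⟩
    obtain ⟨w, u, q, h, hp, hlen, heq, hsnd⟩ :=
      exists_isPath_of_mem_branchEdges hG (by omega) hzz' he
    refine notMem_support_of_lt_egirth hG hyz hp (by rwa [hsnd]) (by simp; omega) ?_
    rw [SimpleGraph.Walk.support_concat]
    rcases Sym2.eq_iff.1 heq with ⟨rfl, -⟩ | ⟨rfl, -⟩ <;> simp

theorem ite_extends_succ (G : SimpleGraph V) (s : Finset (Sym2 V)) (k : ℕ) (x y : V) :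
    (if Extends G s (k + 1) x y then (1 : ℝ) else 0) = 1 - ∏ z ∈ (G.neighborFinset y).erase x,
      (1 - (if s(y, z) ∈ s then 1 else 0) * (if Extends G s k y z then 1 else 0)) := by
  split_ifs with h
  · obtain ⟨z, hzx, hyz, hs, h⟩ := h
    rw [Finset.prod_eq_zero (i := z) (by simp [hzx, hyz]) (by simp [hs, h]), sub_zero]
  · rw [Finset.prod_eq_one, sub_self]
    intro z hz
    rw [Finset.mem_erase, SimpleGraph.mem_neighborFinset] at hz
    have : s(y, z) ∈ s → ¬ Extends G s k y z := fun hs h' ↦ h ⟨z, hz.1, hz.2, hs, h'⟩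
    by_cases hs : s(y, z) ∈ s <;> simp [hs, this]

/-- Bound for the number of darts whose branch of depth `k` contains a given edge. -/
def influence (d : ℕ) : ℕ → ℕ
  | 0 => 0
  | k + 1 => (2 + influence d k) * d

theorem card_filter_dart_edge_eq_le (G : SimpleGraph V) (e : Sym2 V) :
    (Finset.univ.filter fun a : G.Dart ↦ a.edge = e).card ≤ 2 := by
  by_cases he : e ∈ G.edgeSet
  · exact (G.dart_edge_fiber_card e he).le
  · rw [Finset.filter_false_of_mem fun a _ (h : a.edge = e) ↦ he (h ▸ a.edge_mem)]
    exact Nat.zero_le 2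

theorem card_filter_dart_snd_eq (G : SimpleGraph V) (v : V) :
    (Finset.univ.filter fun a : G.Dart ↦ a.snd = v).card = G.degree v := by
  rw [← G.dart_fst_fiber_card_eq_degree v]
  exact Finset.card_equiv (Equiv.ofBijective _ SimpleGraph.Dart.symm_involutive.bijective)
    (by simp)

theorem card_filter_mem_branchEdges_le {d : ℕ} (hd : ∀ v, G.degree v ≤ d) (k : ℕ) (e : Sym2 V) :
    (Finset.univ.filter fun a : G.Dart ↦ e ∈ branchEdges G k a.fst a.snd).card ≤
      influence d k := by
  induction k with
  | zero => simp [branchEdges, influence]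
  | succ k ih =>
    set next := Finset.univ.filter fun a : G.Dart ↦
      a.edge = e ∨ e ∈ branchEdges G k a.fst a.snd with hnext
    have card_next : next.card ≤ 2 + influence d k := by
      rw [hnext, Finset.filter_or]
      exact (Finset.card_union_le _ _).trans (add_le_add (card_filter_dart_edge_eq_le G e) ih)
    have hsub : (Finset.univ.filter fun a : G.Dart ↦ e ∈ branchEdges G (k + 1) a.fst a.snd) ⊆
        next.biUnion fun b ↦ Finset.univ.filter fun a : G.Dart ↦ a.snd = b.fst := by
      intro a ha
      obtain ⟨z, -, hz, he⟩ := mem_branchEdges_succ.1 (Finset.mem_filter.1 ha).2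
      rw [Finset.mem_insert] at he
      simp only [Finset.mem_biUnion, Finset.mem_filter_univ, hnext]
      exact ⟨⟨(a.snd, z), hz⟩, he.imp_left Eq.symm, rfl⟩
    calc _ ≤ next.card * d := (Finset.card_le_card hsub).trans <|
          Finset.card_biUnion_le_card_mul _ _ _ fun b _ ↦
            (card_filter_dart_snd_eq G b.fst).trans_le (hd b.fst)
      _ ≤ influence d (k + 1) := Nat.mul_le_mul_right d card_next

/-- The number of darts of `G` that extend to depth `k` inside `s`. -/
def extendCount (G : SimpleGraph V) (k : ℕ) (s : Finset (Sym2 V)) : ℝ :=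
  ∑ a : G.Dart, if Extends G s k a.fst a.snd then 1 else 0

theorem hasBoundedDifferences_extendCount {d : ℕ} (hd : ∀ v, G.degree v ≤ d) (k : ℕ) :
    HasBoundedDifferences (extendCount G k) (influence d k) := by
  intro s e
  calc |extendCount G k (insert e s) - extendCount G k s|
      ≤ ∑ a : G.Dart, if e ∈ branchEdges G k a.fst a.snd then (1 : ℝ) else 0 := by
        rw [extendCount, extendCount, ← Finset.sum_sub_distrib]
        refine (Finset.abs_sum_le_sum_abs _ _).trans (Finset.sum_le_sum fun a _ ↦ ?_)
        by_cases h : e ∈ branchEdges G k a.fst a.snd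
        · rw [if_pos h]
          split_ifs <;> simp
        · simp [h, extends_insert_iff h]
    _ ≤ influence d k := by
        rw [Finset.sum_boole]
        exact_mod_cast card_filter_mem_branchEdges_le hd k e

end Branching

section RegularBranching

variable {V : Type} [Fintype V] {G : SimpleGraph V} {k N : ℕ} {x y : V}

theorem mem_edgeFinset' {e : Sym2 V} :
    e ∈ edgeFinset' G ↔ e ∈ G.edgeSet := by
  simp [edgeFinset']

/-- By the girth condition the branches at the forward neighbours are disjoint, so the recursion
for a regular tree applies. -/
theorem expect_extends (hG : (N : ℕ∞) < G.egirth) {m : ℕ} (hm : G.IsRegularOfDegree (m + 1))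
    (p : ℝ) (hk : 2 * (k + 1) ≤ N) (hxy : G.Adj x y) :
    expect (edgeFinset' G) p (fun s ↦ if Extends G s k x y then 1 else 0) = survival m p k := by
  induction k generalizing x y with
  | zero => simp [Extends, survival, expect_const]
  | succ k ih =>
    have card_forward : ((G.neighborFinset y).erase x).card = m := by
      rw [Finset.card_erase_of_mem (by simpa using hxy.symm), G.card_neighborFinset_eq_degree, hm y,
        Nat.add_sub_cancel]
    have determined (z : V) : IsDeterminedBy
        (fun s ↦ 1 - (if s(y, z) ∈ s then (1 : ℝ) else 0) * (if Extends G s k y z then 1 else 0))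
        (insert s(y, z) (branchEdges G k y z)) :=
      (((isDeterminedBy_mem _).mono (by simp)).mul
        ((isDeterminedBy_extends G k y z).mono (Finset.subset_insert ..))).const_sub 1
    simp only [ite_extends_succ]
    rw [expect_sub, expect_const, expect_prod_of_pairwiseDisjoint _ _ _ fun z _ ↦ determined z,
      survival, Finset.prod_eq_pow_card, card_forward]
    · intro z hz
      have hyz : G.Adj y z := by simpa using Finset.mem_of_mem_erase hz
      rw [expect_sub, expect_const, expect_mul_of_disjoint _ _ _ (isDeterminedBy_mem _)
        (isDeterminedBy_extends G k y z), expect_mem (mem_edgeFinset'.2 hyz), ih (by omega) hyz]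
      exact Finset.disjoint_singleton_left.2 (notMem_branchEdges hG (by omega) hyz)
    · intro z hz z' hz' hne
      exact disjoint_branchEdges hG (by omega) (by simpa using Finset.mem_of_mem_erase hz)
        (by simpa using Finset.mem_of_mem_erase hz') hne

theorem expect_extendCount (hG : (N : ℕ∞) < G.egirth) {m : ℕ} (hm : G.IsRegularOfDegree (m + 1))
    (p : ℝ) (hk : 2 * (k + 1) ≤ N) :
    expect (edgeFinset' G) p (extendCount G k) = Fintype.card G.Dart * survival m p k := by
  unfold extendCount
  rw [expect_sum, Finset.sum_congr rfl fun a _ ↦ expect_extends hG hm p hk a.adj]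
  simp

end RegularBranching

section Growth

variable {V : Type} {F : Finset (Sym2 V)} {A B S T W : Finset V} {e : Sym2 V} {i j d : ℕ}
  {u v w : V}

/-- The edges of `F` joining `S` to its complement. -/
def boundary (F : Finset (Sym2 V)) (S : Finset V) : Finset (Sym2 V) :=
  F.filter fun e ↦ ∃ x ∈ S, ∃ y, y ∉ S ∧ e = s(x, y)

/-- The edges of `F` meeting `W`. -/
def incident (F : Finset (Sym2 V)) (W : Finset V) : Finset (Sym2 V) :=
  F.filter fun e ↦ ∃ x ∈ W, x ∈ e

theorem mem_boundary : e ∈ boundary F S ↔ e ∈ F ∧ ∃ x ∈ S, ∃ y, y ∉ S ∧ e = s(x, y) := by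
  simp [boundary]

theorem mem_incident : e ∈ incident F W ↔ e ∈ F ∧ ∃ x ∈ W, x ∈ e := by
  simp [incident]

theorem boundary_mono (h : F ⊆ F') (S : Finset V) : boundary F S ⊆ boundary F' S :=
  Finset.filter_subset_filter _ h

theorem boundary_subset (F : Finset (Sym2 V)) (S : Finset V) : boundary F S ⊆ F :=
  Finset.filter_subset _ _

theorem boundary_subset_union [DecidableEq V] (F : Finset (Sym2 V)) (h : S ∆ T ⊆ W) :
    boundary F S ⊆ boundary F T ∪ incident F W := by
  intro e he
  obtain ⟨heF, x, hx, y, hy, rfl⟩ := mem_boundary.1 he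
  rw [Finset.mem_union, mem_boundary, mem_incident]
  by_cases hxT : x ∈ T
  · by_cases hyT : y ∈ T
    · exact Or.inr ⟨heF, y, h (Finset.mem_symmDiff.2 (Or.inr ⟨hyT, hy⟩)), by simp⟩
    · exact Or.inl ⟨heF, x, hxT, y, hyT, rfl⟩
  · exact Or.inr ⟨heF, x, h (Finset.mem_symmDiff.2 (Or.inl ⟨hx, hxT⟩)), by simp⟩

theorem mem_boundary_of_subset_of_subset (hST : S ⊆ T) (hTW : T ⊆ W) (heS : e ∈ boundary F S)
    (heW : e ∈ boundary F W) : e ∈ boundary F T := by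
  obtain ⟨heF, x, hx, y, -, rfl⟩ := mem_boundary.1 heS
  obtain ⟨-, u, hu, v, hv, heq⟩ := mem_boundary.1 heW
  rcases Sym2.eq_iff.1 heq with ⟨rfl, rfl⟩ | ⟨rfl, rfl⟩
  · exact mem_boundary.2 ⟨heF, x, hST hx, y, fun h ↦ hv (hTW h), rfl⟩
  · exact absurd (hTW (hST hx)) hv

theorem exists_mem_boundary_of_walk {H : SimpleGraph V} (q : H.Walk u v) (hq : ∀ e ∈ q.edges, e ∈ F)
    (hu : u ∈ S) (hv : v ∉ S) : ∃ x ∈ q.support, ∃ e ∈ boundary F S, x ∈ e := by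
  obtain ⟨a, ha, hfst, hsnd⟩ := q.exists_boundary_dart S hu hv
  exact ⟨a.fst, q.dart_fst_mem_support_of_mem_darts ha, a.edge,
    mem_boundary.2 ⟨hq _ (List.mem_map_of_mem ha), a.fst, hfst, a.snd, hsnd, rfl⟩, by
      rw [SimpleGraph.Dart.edge]; exact Sym2.mem_mk_left _ _⟩

theorem edges_subset_of_walk_fromEdgeSet
    (q : (SimpleGraph.fromEdgeSet (F : Set (Sym2 V))).Walk u v) : ∀ e ∈ q.edges, e ∈ F :=
  fun _ he ↦ (SimpleGraph.edgeSet_fromEdgeSet (F : Set (Sym2 V)) ▸ q.edges_subset_edgeSet he).1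

variable [Fintype V] {G : SimpleGraph V}

theorem boundary_compl [DecidableEq V] (F : Finset (Sym2 V)) (S : Finset V) :
    boundary F Sᶜ = boundary F S := by
  ext e
  simp only [mem_boundary, Finset.mem_compl, not_not]
  refine and_congr_right fun _ ↦ ⟨?_, ?_⟩ <;>
  · rintro ⟨x, hx, y, hy, rfl⟩
    exact ⟨y, hy, x, hx, Sym2.eq_swap⟩

theorem cutCard_eq_card_boundary [DecidableEq V] (G : SimpleGraph V) (S : Finset V) :
    cutCard G S = (boundary (edgeFinset' G) S).card := by
  unfold cutCard boundary
  congr!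

theorem card_incident_le (hd : ∀ v, G.degree v ≤ d) (hF : F ⊆ edgeFinset' G) (W : Finset V) :
    (incident F W).card ≤ W.card * d := by
  have hsub : incident F W ⊆ W.biUnion (G.incidenceFinset ·) := by
    intro e he
    obtain ⟨heF, x, hx, hxe⟩ := mem_incident.1 he
    exact Finset.mem_biUnion.2 ⟨x, hx, by simpa [SimpleGraph.incidenceSet] using
      ⟨mem_edgeFinset'.1 (hF heF), hxe⟩⟩
  exact (Finset.card_le_card hsub).trans <| Finset.card_biUnion_le_card_mul _ _ _ fun v _ ↦
    (G.card_incidenceFinset_eq_degree v).trans_le (hd v)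

theorem card_edgeFinset'_le (hd : ∀ v, G.degree v ≤ d) :
    (edgeFinset' G).card ≤ Fintype.card V * d := by
  refine (Finset.card_le_card fun e he ↦ ?_).trans (card_incident_le hd subset_rfl Finset.univ)
  induction e using Sym2.ind with
  | _ x y => exact mem_incident.2 ⟨he, x, Finset.mem_univ _, by simp⟩

/-- The vertices at distance at most `i` from `A` along edges of `F`. -/
def edgeBall (F : Finset (Sym2 V)) (i : ℕ) (A : Finset V) : Finset V :=
  Finset.univ.filter fun w ↦
    ∃ a ∈ A, ∃ q : (SimpleGraph.fromEdgeSet (F : Set (Sym2 V))).Walk a w, q.length ≤ i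

theorem mem_edgeBall : w ∈ edgeBall F i A ↔
    ∃ a ∈ A, ∃ q : (SimpleGraph.fromEdgeSet (F : Set (Sym2 V))).Walk a w, q.length ≤ i := by
  simp [edgeBall]

theorem mem_edgeBall_singleton : w ∈ edgeBall F i {v} ↔
    ∃ q : (SimpleGraph.fromEdgeSet (F : Set (Sym2 V))).Walk v w, q.length ≤ i := by
  simp [mem_edgeBall]

theorem subset_edgeBall (F : Finset (Sym2 V)) (i : ℕ) (A : Finset V) : A ⊆ edgeBall F i A :=
  fun a ha ↦ mem_edgeBall.2 ⟨a, ha, .nil, by simp⟩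

theorem edgeBall_mono (h : A ⊆ B) : edgeBall F i A ⊆ edgeBall F i B := fun _ hw ↦
  have ⟨a, ha, hq⟩ := mem_edgeBall.1 hw
  mem_edgeBall.2 ⟨a, h ha, hq⟩

theorem mem_edgeBall_of_edge (hu : u ∈ edgeBall F i A) (huw : s(u, w) ∈ F) :
    w ∈ edgeBall F (i + 1) A := by
  obtain ⟨a, ha, q, hq⟩ := mem_edgeBall.1 hu
  rcases eq_or_ne u w with rfl | hne
  · exact mem_edgeBall.2 ⟨a, ha, q, by omega⟩
  · have hadj : (SimpleGraph.fromEdgeSet (F : Set (Sym2 V))).Adj u w :=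
      (SimpleGraph.fromEdgeSet_adj _).2 ⟨by simpa using huw, hne⟩
    exact mem_edgeBall.2 ⟨a, ha, q.concat hadj, by simpa using hq⟩

theorem mem_edgeBall_singleton_symm (h : w ∈ edgeBall F i {v}) : v ∈ edgeBall F i {w} := by
  obtain ⟨q, hq⟩ := mem_edgeBall_singleton.1 h
  exact mem_edgeBall_singleton.2 ⟨q.reverse, by simpa using hq⟩

theorem mem_edgeBall_singleton_trans (h : v ∈ edgeBall F i {u}) (h' : w ∈ edgeBall F j {v}) :
    w ∈ edgeBall F (i + j) {u} := by
  obtain ⟨q, hq⟩ := mem_edgeBall_singleton.1 h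
  obtain ⟨q', hq'⟩ := mem_edgeBall_singleton.1 h'
  exact mem_edgeBall_singleton.2 ⟨q.append q', by simpa using add_le_add hq hq'⟩

theorem mem_edgeBall_of_walk {H : SimpleGraph V} (q : H.Walk u v) (hq : ∀ e ∈ q.edges, e ∈ F)
    (hi : q.length ≤ i) (hw : w ∈ q.support) : w ∈ edgeBall F i {u} := by
  have hF : ∀ e ∈ (q.takeUntil w hw).edges, e ∈ (SimpleGraph.fromEdgeSet ↑F).edgeSet := by
    intro e he
    have heq := q.edges_takeUntil_subset_edges hw he
    rw [SimpleGraph.edgeSet_fromEdgeSet]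
    exact ⟨hq e heq, H.not_isDiag_of_mem_edgeSet (q.edges_subset_edgeSet heq)⟩
  exact mem_edgeBall_singleton.2 ⟨(q.takeUntil w hw).transfer _ hF, by
    rw [SimpleGraph.Walk.length_transfer]
    exact (q.length_takeUntil_le_length hw).trans hi⟩

theorem edgeBall_succ_subset [DecidableEq V] (hF : F ⊆ edgeFinset' G) (i : ℕ) (A : Finset V) :
    edgeBall F (i + 1) A ⊆ edgeBall F i (A.biUnion fun a ↦ insert a (G.neighborFinset a)) := by
  intro w hw
  obtain ⟨a, ha, q, hq⟩ := mem_edgeBall.1 hw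
  cases q with
  | nil => exact mem_edgeBall.2 ⟨w, Finset.mem_biUnion.2 ⟨w, ha, by simp⟩, .nil, by simp⟩
  | @cons _ b _ hab q =>
    have hG : G.Adj a b :=
      mem_edgeFinset'.1 (hF (by simpa using ((SimpleGraph.fromEdgeSet_adj _).1 hab).1))
    exact mem_edgeBall.2 ⟨b, Finset.mem_biUnion.2 ⟨a, ha, by simp [hG]⟩, q, by simpa using hq⟩

theorem card_edgeBall_le (hd : ∀ v, G.degree v ≤ d) (hF : F ⊆ edgeFinset' G) (i : ℕ)
    (A : Finset V) : (edgeBall F i A).card ≤ A.card * (d + 1) ^ i := by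
  induction i generalizing A with
  | zero =>
    have : edgeBall F 0 A ⊆ A := fun w hw ↦ by
      obtain ⟨a, ha, q, hq⟩ := mem_edgeBall.1 hw
      exact q.eq_of_length_eq_zero (by omega) ▸ ha
    simpa using Finset.card_le_card this
  | succ i ih =>
    have hA : (A.biUnion fun a ↦ insert a (G.neighborFinset a)).card ≤ A.card * (d + 1) :=
      Finset.card_biUnion_le_card_mul _ _ _ fun a _ ↦
        (Finset.card_insert_le _ _).trans (Nat.succ_le_succ (hd a))
    calc (edgeBall F (i + 1) A).card
        ≤ (A.biUnion fun a ↦ insert a (G.neighborFinset a)).card * (d + 1) ^ i :=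
          (Finset.card_le_card (edgeBall_succ_subset hF i A)).trans (ih _)
      _ ≤ A.card * (d + 1) * (d + 1) ^ i := Nat.mul_le_mul_right _ hA
      _ = A.card * (d + 1) ^ (i + 1) := by ring

theorem exists_crossing_of_mem_edgeBall (h : w ∈ edgeBall F i A) :
    ∃ P ⊆ F, P.card ≤ i ∧ ∀ S : Finset V, A ⊆ S → w ∉ S → (boundary P S).Nonempty := by
  obtain ⟨a, ha, q, hq⟩ := mem_edgeBall.1 h
  refine ⟨q.edges.toFinset, fun e he ↦ edges_subset_of_walk_fromEdgeSet q e (by simpa using he),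
    (q.edges.toFinset_card_le.trans_eq q.length_edges).trans hq, fun S hS hw ↦ ?_⟩
  obtain ⟨-, -, e, he, -⟩ := exists_mem_boundary_of_walk q
    (fun e he ↦ List.mem_toFinset.2 he) (hS ha) hw
  exact ⟨e, he⟩

theorem exists_boundary_of_mem_edgeBall (h : w ∈ edgeBall F i {v}) (hv : v ∈ T) (hw : w ∉ T) :
    ∃ x ∈ edgeBall F i {v}, ∃ e ∈ boundary F T, x ∈ e := by
  obtain ⟨q, hq⟩ := mem_edgeBall_singleton.1 h
  have hF := edges_subset_of_walk_fromEdgeSet q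
  obtain ⟨x, hx, he⟩ := exists_mem_boundary_of_walk q hF hv hw
  exact ⟨x, mem_edgeBall_of_walk q hF hq hx, he⟩

end Growth

section SubsetCount

variable {α : Type*} [DecidableEq α] {E : Finset α} {p : ℝ} {𝒬 : Finset (Finset α)}

theorem hasBoundedDifferences_card_filter_subset
    (hdisj : (𝒬 : Set (Finset α)).PairwiseDisjoint id) :
    HasBoundedDifferences (fun t ↦ ((𝒬.filter (· ⊆ t)).card : ℝ)) 1 := by
  intro t a
  have hsub : 𝒬.filter (· ⊆ t) ⊆ 𝒬.filter (· ⊆ insert a t) :=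
    Finset.monotone_filter_right _ fun P _ hP ↦ hP.trans (Finset.subset_insert a t)
  have mem_of_new {P : Finset α} (hP : P ∈ 𝒬.filter (· ⊆ insert a t) \ 𝒬.filter (· ⊆ t)) :
      P ∈ 𝒬 ∧ a ∈ P := by
    simp only [Finset.mem_sdiff, Finset.mem_filter, not_and] at hP
    refine ⟨hP.1.1, ?_⟩
    by_contra ha
    exact hP.2 hP.1.1 ((Finset.subset_insert_iff_of_notMem ha).1 hP.1.2)
  have hnew : (𝒬.filter (· ⊆ insert a t) \ 𝒬.filter (· ⊆ t)).card ≤ 1 := by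
    refine Finset.card_le_one.2 fun P hP Q hQ ↦ ?_
    by_contra hne
    exact Finset.disjoint_left.1 (hdisj (mem_of_new hP).1 (mem_of_new hQ).1 hne)
      (mem_of_new hP).2 (mem_of_new hQ).2
  beta_reduce
  rw [← Finset.card_sdiff_add_card_eq_card hsub, Nat.cast_add, add_sub_cancel_right, Nat.abs_cast]
  exact_mod_cast hnew

theorem card_mul_pow_le_expect (h0 : 0 ≤ p) (h1 : p ≤ 1) {m : ℕ}
    (h𝒬 : ∀ P ∈ 𝒬, P ⊆ E ∧ P.card ≤ m) :
    𝒬.card * p ^ m ≤ expect E p fun t ↦ ((𝒬.filter (· ⊆ t)).card : ℝ) := by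
  calc (𝒬.card * p ^ m : ℝ) = ∑ _P ∈ 𝒬, p ^ m := by rw [Finset.sum_const, nsmul_eq_mul]
    _ ≤ ∑ P ∈ 𝒬, prob E p (P ⊆ ·) := Finset.sum_le_sum fun P hP ↦ by
        rw [prob_subset (h𝒬 P hP).1]
        exact pow_le_pow_of_le_one h0 h1 (h𝒬 P hP).2
    _ = expect E p fun t ↦ ((𝒬.filter (· ⊆ t)).card : ℝ) := by
        simp only [prob]
        rw [← expect_sum]
        refine expect_congr fun t _ ↦ ?_
        simp only [Finset.card_filter, Nat.cast_sum, Nat.cast_ite, Nat.cast_one, Nat.cast_zero]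
        congr!

end SubsetCount

section Separation

variable {V : Type} [Fintype V] [DecidableEq V] {G : SimpleGraph V} {b α : ℝ} {d j : ℕ}
  {A B : Finset V} {M : Finset (Sym2 V)}

theorem IsExpander.degree_le (hG : IsExpander G b d) (v : V) : G.degree v ≤ d := by
  rw [← G.card_neighborSet_eq_degree, ← Set.toFinset_card, ← Set.ncard_eq_toFinset_card']
  exact hG.1 v

theorem cutCard_edgeBall_le (hd : ∀ v, G.degree v ≤ d) (M : Finset (Sym2 V)) (i : ℕ)
    (A : Finset V) : cutCard G (edgeBall (edgeFinset' G \ M) i A) ≤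
      M.card + (edgeBall (edgeFinset' G \ M) (i + 1) A \ edgeBall (edgeFinset' G \ M) i A).card *
        d := by
  set B := edgeBall (edgeFinset' G \ M) i A
  set B' := edgeBall (edgeFinset' G \ M) (i + 1) A
  have hsub : boundary (edgeFinset' G) B ⊆ M ∪ incident (edgeFinset' G) (B' \ B) := by
    intro e he
    obtain ⟨heE, x, hx, y, hy, rfl⟩ := mem_boundary.1 he
    rw [Finset.mem_union, mem_incident]
    refine or_iff_not_imp_left.2 fun hM ↦ ⟨heE, y, Finset.mem_sdiff.2 ⟨?_, hy⟩, by simp⟩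
    exact mem_edgeBall_of_edge hx (Finset.mem_sdiff.2 ⟨heE, hM⟩)
  rw [cutCard_eq_card_boundary]
  exact (Finset.card_le_card hsub).trans <| (Finset.card_union_le _ _).trans <|
    Nat.add_le_add_left (card_incident_le hd subset_rfl _) _

theorem IsExpander.le_card_edgeBall (hG : IsExpander G b d) (hb : 0 < b) (hd : 0 < d)
    (hA : α * Fintype.card V ≤ A.card) (hM : (M.card : ℝ) ≤ b * α / 2 * Fintype.card V) (i : ℕ) :
    (Fintype.card V : ℝ) / 2 < (edgeBall (edgeFinset' G \ M) i A).card ∨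
      i * (b * α / (2 * d)) * Fintype.card V ≤ (edgeBall (edgeFinset' G \ M) i A).card := by
  induction i with
  | zero => simp
  | succ i ih =>
    have hcut := cutCard_edgeBall_le hG.degree_le M i A
    set B := edgeBall (edgeFinset' G \ M) i A
    set B' := edgeBall (edgeFinset' G \ M) (i + 1) A
    have hBB' : B ⊆ B' := fun w hw ↦
      have ⟨a, ha, q, hq⟩ := mem_edgeBall.1 hw
      mem_edgeBall.2 ⟨a, ha, q, hq.trans i.le_succ⟩
    have hcard : (B.card : ℝ) ≤ B'.card := mod_cast Finset.card_le_card hBB'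
    rcases lt_or_ge ((Fintype.card V : ℝ) / 2) B.card with hlt | hle
    · exact Or.inl (hlt.trans_le hcard)
    have hAB : b * (α * Fintype.card V) ≤ b * B.card :=
      mul_le_mul_of_nonneg_left (hA.trans (mod_cast Finset.card_le_card (subset_edgeBall ..))) hb.le
    have hgrowth : b * α / (2 * d) * Fintype.card V ≤ B'.card - B.card := by
      rify [Finset.cast_card_sdiff hBB'] at hcut
      have hd' : (0 : ℝ) < d := mod_cast hd
      calc b * α / (2 * d) * Fintype.card V = b * α / 2 * Fintype.card V / d := by field_simp
        _ ≤ B'.card - B.card := (div_le_iff₀ hd').2 (by linarith [hG.2 B hle])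
    right
    push_cast
    linarith [ih.resolve_left hle.not_gt]

theorem IsExpander.exists_crossing (hG : IsExpander G b d) (hb : 0 < b) (hd : 0 < d)
    (hV : 0 < Fintype.card V) (hj : 1 / 2 < j * (b * α / (2 * d)))
    (hA : α * Fintype.card V ≤ A.card) (hB : α * Fintype.card V ≤ B.card)
    (hM : (M.card : ℝ) ≤ b * α / 2 * Fintype.card V) :
    ∃ P ⊆ edgeFinset' G \ M, P.card ≤ 2 * j ∧
      ∀ S : Finset V, A ⊆ S → Disjoint B S → (boundary P S).Nonempty := by
  have half_lt {C : Finset V} (hC : α * Fintype.card V ≤ C.card) :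
      (Fintype.card V : ℝ) / 2 < (edgeBall (edgeFinset' G \ M) j C).card := by
    refine (hG.le_card_edgeBall hb hd hC hM j).elim id fun h ↦ ?_
    have := mul_lt_mul_of_pos_right hj (Nat.cast_pos.2 hV)
    linarith
  obtain ⟨w, hw⟩ :
      (edgeBall (edgeFinset' G \ M) j A ∩ edgeBall (edgeFinset' G \ M) j B).Nonempty := by
    refine Finset.inter_nonempty_of_card_lt_card_add_card (Finset.subset_univ _)
      (Finset.subset_univ _) ?_
    rw [Finset.card_univ]
    have := half_lt hA
    have := half_lt hB
    rify
    linarith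
  rw [Finset.mem_inter] at hw
  obtain ⟨P, hP, hPcard, hPS⟩ := exists_crossing_of_mem_edgeBall hw.1
  obtain ⟨Q, hQ, hQcard, hQS⟩ := exists_crossing_of_mem_edgeBall hw.2
  refine ⟨P ∪ Q, Finset.union_subset hP hQ, (Finset.card_union_le _ _).trans (by omega),
    fun S hAS hBS ↦ ?_⟩
  by_cases hwS : w ∈ S
  · rw [← boundary_compl]
    exact (hQS Sᶜ (Finset.subset_compl_iff_disjoint_right.2 hBS) (by simpa using hwS)).mono
      (boundary_mono Finset.subset_union_right _)
  · exact (hPS S hAS hwS).mono (boundary_mono Finset.subset_union_left _)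

theorem IsExpander.exists_crossings (hG : IsExpander G b d) (hb : 0 < b) (hd : 0 < d)
    (hV : 0 < Fintype.card V) (hj : 1 / 2 < j * (b * α / (2 * d)))
    (hA : α * Fintype.card V ≤ A.card) (hB : α * Fintype.card V ≤ B.card) (hAB : Disjoint B A)
    (N : ℕ) (hN : (2 * j * N : ℝ) ≤ b * α / 2 * Fintype.card V + 2 * j) :
    ∃ 𝒬 : Finset (Finset (Sym2 V)), 𝒬.card = N ∧
      (𝒬 : Set (Finset (Sym2 V))).PairwiseDisjoint id ∧
      ∀ P ∈ 𝒬, P ⊆ edgeFinset' G ∧ P.card ≤ 2 * j ∧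
        ∀ S : Finset V, A ⊆ S → Disjoint B S → (boundary P S).Nonempty := by
  induction N with
  | zero => exact ⟨∅, by simp⟩
  | succ N ih =>
    push_cast at hN
    obtain ⟨𝒬, hcard, hdisj, h𝒬⟩ := ih (by linarith [j.cast_nonneg (α := ℝ)])
    have hM : ((𝒬.biUnion id).card : ℝ) ≤ b * α / 2 * Fintype.card V := by
      have : ((𝒬.biUnion id).card : ℝ) ≤ N * (2 * j) := mod_cast hcard ▸
        Finset.card_biUnion_le_card_mul 𝒬 id (2 * j) fun P hP ↦ (h𝒬 P hP).2.1
      linarith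
    obtain ⟨P, hP, hPcard, hPS⟩ := hG.exists_crossing hb hd hV hj hA hB hM
    have hP𝒬 (Q : Finset (Sym2 V)) (hQ : Q ∈ 𝒬) : Disjoint P Q :=
      Finset.disjoint_of_subset_left hP <| Finset.sdiff_disjoint.mono_right <|
        Finset.subset_biUnion_of_mem id hQ
    have hPne : P.Nonempty := (hPS A subset_rfl hAB).mono (boundary_subset P A)
    refine ⟨insert P 𝒬, ?_, ?_, ?_⟩
    · rw [Finset.card_insert_of_notMem fun h ↦ hPne.ne_empty (disjoint_self.1 (hP𝒬 P h)), hcard]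
    · rw [Finset.coe_insert]
      exact hdisj.insert fun Q hQ _ ↦ hP𝒬 Q hQ
    · exact Finset.forall_mem_insert .. |>.2 ⟨⟨hP.trans Finset.sdiff_subset, hPcard, hPS⟩, h𝒬⟩

theorem card_filter_subset_le_card_boundary {V : Type} [DecidableEq V] {S : Finset V}
    {𝒬 : Finset (Finset (Sym2 V))} (hdisj : (𝒬 : Set (Finset (Sym2 V))).PairwiseDisjoint id)
    (h𝒬 : ∀ P ∈ 𝒬, (boundary P S).Nonempty) (t : Finset (Sym2 V)) :
    (𝒬.filter (· ⊆ t)).card ≤ (boundary t S).card := by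
  have hsub : ((𝒬.filter (· ⊆ t)).biUnion fun P ↦ boundary P S) ⊆ boundary t S :=
    Finset.biUnion_subset.2 fun P hP ↦ boundary_mono (Finset.mem_filter.1 hP).2 S
  refine (Finset.card_le_card_biUnion (fun P hP Q hQ hPQ ↦ ?_)
    fun P hP ↦ h𝒬 P (Finset.mem_filter.1 hP).1).trans (Finset.card_le_card hsub)
  exact (hdisj (Finset.mem_filter.1 hP).1 (Finset.mem_filter.1 hQ).1 hPQ).mono
    (boundary_subset P S) (boundary_subset Q S)

/-- The crossings of disjoint large sets are edge-disjoint, linearly many and of bounded length, so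
the number of them that survive percolation concentrates around a linear mean. -/
theorem exists_prob_boundary_lt_le (hb : 0 < b) (hd : 0 < d) {δ : ℝ} (hα : 0 < α) (hδ0 : 0 < δ)
    (hδ1 : δ ≤ 1) :
    ∃ κ > 0, ∃ c > 0, ∀ (V : Type) [Fintype V] [DecidableEq V] (G : SimpleGraph V),
      IsExpander G b d → 0 < Fintype.card V → ∀ A B : Finset V, Disjoint B A →
        α * Fintype.card V ≤ A.card → α * Fintype.card V ≤ B.card →
        prob (edgeFinset' G) δ (fun t ↦ ∃ S : Finset V, A ⊆ S ∧ Disjoint B S ∧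
          ((boundary t S).card : ℝ) < κ * Fintype.card V) ≤ Real.exp (-(c * Fintype.card V)) := by
  have : (0 : ℝ) < d := mod_cast hd
  obtain ⟨j, hj⟩ := exists_nat_gt (1 / 2 / (b * α / (2 * d)))
  have hj0 : (0 : ℝ) < j := (show (0 : ℝ) ≤ _ by positivity).trans_lt hj
  rw [div_lt_iff₀ (by positivity)] at hj
  set ν := b * α / (4 * j) with hν
  set κ := ν * δ ^ (2 * j) / 2 with hκ
  refine ⟨κ, by positivity, κ ^ 2 / (4 * d), by positivity, ?_⟩
  intro V _ _ G hG hV A B hAB hA hB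
  have hV' : (0 : ℝ) < Fintype.card V := mod_cast hV
  set n : ℝ := (Fintype.card V : ℝ) with hn
  have hN : (2 * j * ⌈ν * n⌉₊ : ℝ) ≤ b * α / 2 * n + 2 * j := by
    calc (2 * j * ⌈ν * n⌉₊ : ℝ) ≤ 2 * j * (ν * n + 1) := by
          gcongr; exact (Nat.ceil_lt_add_one (by positivity)).le
      _ = b * α / 2 * n + 2 * j := by rw [hν]; field_simp; ring
  obtain ⟨𝒬, hcard, hdisj, h𝒬⟩ := hG.exists_crossings hb hd hV hj hA hB hAB ⌈ν * n⌉₊ hN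
  have hmean : 2 * κ * n ≤
      expect (edgeFinset' G) δ fun t ↦ ((𝒬.filter (· ⊆ t)).card : ℝ) := by
    calc 2 * κ * n = ν * n * δ ^ (2 * j) := by rw [hκ]; ring
      _ ≤ 𝒬.card * δ ^ (2 * j) := by rw [hcard]; gcongr; exact Nat.le_ceil _
      _ ≤ _ := card_mul_pow_le_expect hδ0.le hδ1 fun P hP ↦ ⟨(h𝒬 P hP).1, (h𝒬 P hP).2.1⟩
  have hE : ((edgeFinset' G).card : ℝ) ≤ n * d := by
    rw [hn]
    exact_mod_cast card_edgeFinset'_le hG.degree_le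
  have htail := (hasBoundedDifferences_card_filter_subset hdisj).prob_le_expect_sub hδ0.le hδ1
    one_pos (m := n * d) (x := κ * n) (by positivity) hE (by positivity)
  rw [show (κ * n) ^ 2 / (4 * 1 ^ 2 * (n * d)) = κ ^ 2 / (4 * d) * n by field_simp] at htail
  refine (prob_mono hδ0.le hδ1 ?_).trans htail
  rintro t - ⟨S, hAS, hBS, hlt⟩
  have hcount : ((𝒬.filter (· ⊆ t)).card : ℝ) ≤ (boundary t S).card := mod_cast
    card_filter_subset_le_card_boundary hdisj (fun P hP ↦ (h𝒬 P hP).2.2 S hAS hBS) t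
  linarith

end Separation

section Cells

variable {V : Type} [Fintype V] {G : SimpleGraph V} {F s t : Finset (Sym2 V)} {d r : ℕ}

/-- The vertices whose ball of radius `r` along edges of `F` has more than `r` elements. -/
def thickSet (F : Finset (Sym2 V)) (r : ℕ) : Finset V :=
  Finset.univ.filter fun v ↦ r + 1 ≤ (edgeBall F r {v}).card

theorem mem_thickSet {v : V} : v ∈ thickSet F r ↔ r + 1 ≤ (edgeBall F r {v}).card := by
  simp [thickSet]

/-- The centers are a maximal family of thick vertices with disjoint balls. -/
theorem exists_centers (F : Finset (Sym2 V)) (r : ℕ) :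
    ∃ Z : Finset V, Z.card * (r + 1) ≤ Fintype.card V ∧
      ∀ v ∈ thickSet F r, ∃ z ∈ Z, z ∈ edgeBall F (2 * r) {v} := by
  classical
  set 𝒵 : Finset (Finset V) := (thickSet F r).powerset.filter fun Z ↦
    (Z : Set V).PairwiseDisjoint fun z ↦ edgeBall F r {z} with h𝒵
  obtain ⟨Z, hZ, hmax⟩ := 𝒵.exists_max_image Finset.card ⟨∅, by simp [h𝒵]⟩
  rw [h𝒵, Finset.mem_filter, Finset.mem_powerset] at hZ
  obtain ⟨hthick, hdisj⟩ := hZ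
  refine ⟨Z, ?_, fun v hv ↦ ?_⟩
  · calc Z.card * (r + 1) ≤ ∑ z ∈ Z, (edgeBall F r {z}).card :=
          Finset.card_nsmul_le_sum Z _ _ fun z hz ↦ mem_thickSet.1 (hthick hz)
      _ = (Z.biUnion fun z ↦ edgeBall F r {z}).card := (Finset.card_biUnion hdisj).symm
      _ ≤ Fintype.card V := Finset.card_le_univ _
  · by_contra! hfar
    have hvZ : v ∉ Z := fun h ↦ hfar v h (subset_edgeBall _ _ _ (by simp))
    have hinsert : insert v Z ∈ 𝒵 := by
      rw [h𝒵, Finset.mem_filter, Finset.mem_powerset, Finset.coe_insert]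
      refine ⟨Finset.insert_subset hv hthick, hdisj.insert fun z hz _ ↦ ?_⟩
      refine Finset.disjoint_left.2 fun w hwv hwz ↦ hfar z hz ?_
      rw [two_mul]
      exact mem_edgeBall_singleton_trans hwv (mem_edgeBall_singleton_symm hwz)
    have := hmax _ hinsert
    rw [Finset.card_insert_of_notMem hvZ] at this
    omega

theorem card_filter_exists_mem_le (B : Finset (Sym2 V)) :
    (Finset.univ.filter fun x : V ↦ ∃ e ∈ B, x ∈ e).card ≤ B.card * 2 := by
  have hsub : (Finset.univ.filter fun x : V ↦ ∃ e ∈ B, x ∈ e) ⊆ B.biUnion Sym2.toFinset := by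
    intro x hx
    simpa using hx
  refine (Finset.card_le_card hsub).trans (Finset.card_biUnion_le_card_mul _ _ _ fun e _ ↦ ?_)
  rw [Sym2.card_toFinset]
  split_ifs <;> omega

theorem card_le_mul_card_boundary (hd : ∀ v, G.degree v ≤ d) (hF : F ⊆ edgeFinset' G)
    {D T : Finset V} {i : ℕ} (h : ∀ v ∈ D, ∃ x ∈ edgeBall F i {v}, ∃ e ∈ boundary F T, x ∈ e) :
    D.card ≤ (boundary F T).card * 2 * (d + 1) ^ i := by
  have hsub : D ⊆ edgeBall F i (Finset.univ.filter fun x ↦ ∃ e ∈ boundary F T, x ∈ e) := by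
    intro v hv
    obtain ⟨x, hx, hxe⟩ := h v hv
    exact edgeBall_mono (by simpa using hxe) (mem_edgeBall_singleton_symm hx)
  exact (Finset.card_le_card hsub).trans <| (card_edgeBall_le hd hF _ _).trans <|
    Nat.mul_le_mul_right _ (card_filter_exists_mem_le _)

/-- A thick vertex and its center lie on the same side of `T` unless a boundary edge is nearby, so
the centers in `T` determine the thick part of `T` up to the ball around the boundary. -/
theorem exists_approx_family [DecidableEq V] (hd : ∀ v, G.degree v ≤ d) (hF : F ⊆ edgeFinset' G)
    (r : ℕ) :
    ∃ 𝒜 : Finset (Finset V), 𝒜.card ≤ 2 ^ (Fintype.card V / (r + 1)) ∧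
      ∀ T : Finset V, ∃ A ∈ 𝒜,
        (A ∆ (T ∩ thickSet F r)).card ≤ (boundary F T).card * 2 * (d + 1) ^ (2 * r) := by
  obtain ⟨Z, hZcard, hZ⟩ := exists_centers F r
  choose! c hcZ hc using hZ
  refine ⟨Z.powerset.image fun Z' ↦ (thickSet F r).filter (c · ∈ Z'),
    Finset.card_image_le.trans ?_, fun T ↦ ?_⟩
  · rw [Finset.card_powerset]
    exact Nat.pow_le_pow_right two_pos ((Nat.le_div_iff_mul_le r.succ_pos).2 hZcard)
  refine ⟨(thickSet F r).filter (c · ∈ Z ∩ T),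
    Finset.mem_image.2 ⟨Z ∩ T, by simp, rfl⟩,
    card_le_mul_card_boundary hd hF fun v hv ↦ ?_⟩
  rcases Finset.mem_symmDiff.1 hv with ⟨hA, hvT⟩ | ⟨hvT, hA⟩
  · obtain ⟨hvU, hcT⟩ := Finset.mem_filter.1 hA
    rw [← boundary_compl]
    refine exists_boundary_of_mem_edgeBall (hc v hvU)
      (Finset.mem_compl.2 fun h ↦ hvT (Finset.mem_inter.2 ⟨h, hvU⟩)) ?_
    simpa using (Finset.mem_inter.1 hcT).2
  · obtain ⟨hvT, hvU⟩ := Finset.mem_inter.1 hvT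
    exact exists_boundary_of_mem_edgeBall (hc v hvU) hvT fun h ↦
      hA (Finset.mem_filter.2 ⟨hvU, Finset.mem_inter.2 ⟨hcZ v hvU, h⟩⟩)

theorem card_le_card_add_card_symmDiff {α : Type*} [DecidableEq α] (A B : Finset α) :
    B.card ≤ A.card + (A ∆ B).card := by
  refine (Finset.card_le_card fun x hx ↦ ?_).trans (Finset.card_union_le _ _)
  by_cases hA : x ∈ A <;> simp [Finset.mem_symmDiff, hA, hx]

theorem card_boundary_le_add_mul (hd : ∀ v, G.degree v ≤ d) (ht : t ⊆ edgeFinset' G)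
    {S T D : Finset V} [DecidableEq V] (h : S ∆ T ⊆ D) :
    (boundary t S).card ≤ (boundary t T).card + D.card * d :=
  (Finset.card_le_card (boundary_subset_union t h)).trans <|
    (Finset.card_union_le _ _).trans (Nat.add_le_add_left (card_incident_le hd ht D) _)

/-- The approximation `A` of a set `T` splitting `thickSet s r` would be separated from the rest of
`thickSet s r` by `T`, corrected on the few vertices where `A` and `T` disagree. -/
theorem card_inter_lt_or_card_sdiff_lt [DecidableEq V] (hd : ∀ v, G.degree v ≤ d)
    (ht : t ⊆ edgeFinset' G) {η κ β n : ℝ} {𝒜 : Finset (Finset V)}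
    (h𝒜 : ∀ T : Finset V, ∃ A ∈ 𝒜,
      (A ∆ (T ∩ thickSet s r)).card ≤ (boundary s T).card * 2 * (d + 1) ^ (2 * r))
    (hη : β * 2 * (d + 1) ^ (2 * r) ≤ η / 2 * n)
    (hκ : β + β * 2 * (d + 1) ^ (2 * r) * d < κ * n)
    (hsep : ∀ A ∈ 𝒜, η / 2 * n ≤ A.card → η / 2 * n ≤ (thickSet s r \ A).card →
      ∀ S : Finset V, A ⊆ S → Disjoint (thickSet s r \ A) S → κ * n ≤ (boundary t S).card)
    {T : Finset V} (hT : (boundary (s ∪ t) T).card ≤ β) :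
    ((T ∩ thickSet s r).card : ℝ) < η * n ∨ ((thickSet s r \ T).card : ℝ) < η * n := by
  by_contra! hbig
  set U := thickSet s r
  obtain ⟨A, hA, hAT⟩ := h𝒜 T
  set D := A ∆ (T ∩ U)
  have hs : ((boundary s T).card : ℝ) ≤ β := le_trans
    (mod_cast Finset.card_le_card (boundary_mono Finset.subset_union_left T)) hT
  have ht' : ((boundary t T).card : ℝ) ≤ β := le_trans
    (mod_cast Finset.card_le_card (boundary_mono Finset.subset_union_right T)) hT
  have hD : (D.card : ℝ) ≤ β * 2 * (d + 1) ^ (2 * r) :=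
    (show (D.card : ℝ) ≤ (boundary s T).card * 2 * (d + 1) ^ (2 * r) from mod_cast hAT).trans
      (by gcongr)
  have hAbig : η / 2 * n ≤ A.card := by
    have : ((T ∩ U).card : ℝ) ≤ A.card + D.card := mod_cast card_le_card_add_card_symmDiff A _
    linarith [hbig.1]
  have hUAbig : η / 2 * n ≤ (U \ A).card := by
    have hsub : (U \ A) ∆ (U \ T) ⊆ D := fun x hx ↦ by
      simp only [D, Finset.mem_symmDiff, Finset.mem_sdiff, Finset.mem_inter] at hx ⊢
      tauto
    have : ((U \ T).card : ℝ) ≤ (U \ A).card + D.card := mod_cast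
      (card_le_card_add_card_symmDiff (U \ A) _).trans
        (Nat.add_le_add_left (Finset.card_le_card hsub) _)
    linarith [hbig.2]
  have hcorrect : ((T ∪ A) \ (U \ A)) ∆ T ⊆ D := fun x hx ↦ by
    simp only [D, Finset.mem_symmDiff, Finset.mem_sdiff, Finset.mem_union, Finset.mem_inter] at hx ⊢
    tauto
  have hlarge := hsep A hA hAbig hUAbig ((T ∪ A) \ (U \ A)) (fun x hx ↦ by simp [hx])
    Finset.disjoint_sdiff
  have hsmall : ((boundary t ((T ∪ A) \ (U \ A))).card : ℝ) ≤ (boundary t T).card + D.card * d :=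
    mod_cast card_boundary_le_add_mul hd ht hcorrect
  have : (D.card : ℝ) * d ≤ β * 2 * (d + 1) ^ (2 * r) * d := by gcongr
  linarith

end Cells

section Components

variable {V : Type} [Fintype V] {G H : SimpleGraph V} {F : Finset (Sym2 V)} {d k r N R : ℕ}
  {u v x y : V} {c : H.ConnectedComponent}

theorem mem_compVerts : v ∈ compVerts H c ↔ H.connectedComponentMk v = c := by
  simp [compVerts]

theorem mem_compVerts_mk : v ∈ compVerts H (H.connectedComponentMk u) ↔ H.Reachable v u := by
  rw [mem_compVerts, SimpleGraph.ConnectedComponent.eq]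

theorem eventA_of_isPath {q : H.Walk y u} (hq : q.IsPath) (hx : x ∉ q.support)
    (hR : R ≤ q.length + 1) : eventA H R x y := by
  have hxy : s(x, y) ∉ q.edges := fun h ↦ hx (q.fst_mem_support_of_mem_edges h)
  refine le_trans ?_ (Finset.card_le_card (s := q.support.toFinset) fun w hw ↦ ?_)
  · rwa [List.toFinset_card_of_nodup hq.support_nodup, SimpleGraph.Walk.length_support]
  · have hw' : w ∈ (q.toDeleteEdge _ hxy).support := by simpa using hw
    exact mem_compVerts_mk.2 ((q.toDeleteEdge _ hxy).takeUntil w hw').reachable.symm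

theorem exists_isPath_le_length (hd : ∀ v, H.degree v ≤ d) (hd0 : 0 < d)
    (hy : (d + 1) ^ k ≤ (compVerts H (H.connectedComponentMk y)).card) :
    ∃ (u : V) (q : H.Walk y u), q.IsPath ∧ k ≤ q.length := by
  cases k with
  | zero => exact ⟨y, .nil, by simp, by simp⟩
  | succ k =>
    have hball : (edgeBall (edgeFinset' H) k {y}).card < (d + 1) ^ (k + 1) := by
      refine (card_edgeBall_le hd subset_rfl k {y}).trans_lt ?_
      rw [Finset.card_singleton, one_mul]
      exact Nat.pow_lt_pow_right (by omega) k.lt_succ_self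
    obtain ⟨w, hw, hfar⟩ := Finset.exists_mem_notMem_of_card_lt_card (hball.trans_le hy)
    obtain ⟨q, hq⟩ := (mem_compVerts_mk.1 hw).symm.exists_isPath
    refine ⟨w, q, hq, ?_⟩
    by_contra! hlt
    exact hfar (mem_edgeBall_of_walk q (fun e he ↦ mem_edgeFinset'.2 (q.edges_subset_edgeSet he))
      (by omega) q.end_mem_support)

theorem extends_of_isPath_of_le (hH : H ≤ G) {q : H.Walk y u} (hq : q.IsPath) (hx : q.snd ≠ x)
    (hk : k ≤ q.length) : Extends G (edgeFinset' H) k x y :=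
  extends_of_isPath hH hq (fun _ he ↦ mem_edgeFinset'.2 (q.edges_subset_edgeSet he)) hx hk

theorem extends_of_pow_le_card_compVerts (hd : ∀ v, G.degree v ≤ d) (hd0 : 0 < d) (hH : H ≤ G)
    (hyx : ¬ H.Adj y x) (hy : (d + 1) ^ k ≤ (compVerts H (H.connectedComponentMk y)).card) :
    Extends G (edgeFinset' H) k x y := by
  obtain ⟨u, q, hq, hk⟩ := exists_isPath_le_length
    (fun v ↦ (SimpleGraph.degree_le_of_le hH).trans (hd v)) hd0 hy
  rcases q.length.eq_zero_or_pos with h0 | hpos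
  · obtain rfl : k = 0 := by omega
    trivial
  · exact extends_of_isPath_of_le hH hq
      (fun hx ↦ hyx (hx ▸ q.adj_snd (SimpleGraph.Walk.not_nil_iff_lt_length.2 hpos))) hk

theorem extends_of_eventA (hd : ∀ v, G.degree v ≤ d) (hd0 : 0 < d) (hH : H ≤ G)
    (hR : (d + 1) ^ k ≤ R) (h : eventA H R x y) : Extends G (edgeFinset' H) k x y := by
  have hle : H.deleteEdges {s(x, y)} ≤ H := SimpleGraph.deleteEdges_le _
  refine (extends_of_pow_le_card_compVerts hd hd0 (hle.trans hH) (fun hyx ↦ ?_) (hR.trans h)).mono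
    fun e he ↦ mem_edgeFinset'.2 (SimpleGraph.edgeSet_mono hle (mem_edgeFinset'.1 he))
  exact (SimpleGraph.deleteEdges_adj.1 hyx).2 Sym2.eq_swap

theorem Extends.mem_thickSet (hG : (N : ℕ∞) < G.egirth) (hr : r + 1 ≤ N) (hxy : G.Adj x y)
    (h : Extends G F r x y) : y ∈ thickSet F r := by
  obtain ⟨u, q, hq, hlen, -, he⟩ := h.exists_isPath hG hr hxy
  refine Percolation.mem_thickSet.2 (le_trans (b := q.support.toFinset.card) ?_ ?_)
  · rw [List.toFinset_card_of_nodup hq.support_nodup, SimpleGraph.Walk.length_support, hlen]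
  · exact Finset.card_le_card fun w hw ↦ mem_edgeBall_of_walk q he hlen.le (List.mem_toFinset.1 hw)

end Components

section TwoCore

variable {V : Type} {H : SimpleGraph V} {R : ℕ} {x y : V} {c : H.ConnectedComponent}

theorem twoCoreComp_le (c : H.ConnectedComponent) : twoCoreComp H c ≤ H :=
  sSup_le fun _ h ↦ h.1

theorem twoCoreComp_adj_of_not_isBridge (hxy : H.Adj x y) (hx : H.connectedComponentMk x = c)
    (hb : ¬ H.IsBridge s(x, y)) : (twoCoreComp H c).Adj x y := by
  rw [SimpleGraph.isBridge_iff_forall_cycle_notMem ((SimpleGraph.mem_edgeSet H).2 hxy)] at hb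
  push Not at hb
  obtain ⟨u, q, hq, he⟩ := hb
  have hux : H.connectedComponentMk u = c := hx ▸
    SimpleGraph.ConnectedComponent.eq.2
      (q.takeUntil x (q.fst_mem_support_of_mem_edges he)).reachable
  have hsupp : ∀ v ∈ q.toSubgraph.spanningCoe.support, v ∈ q.support := fun v ⟨w, hw⟩ ↦
    q.mem_verts_toSubgraph.1 (q.toSubgraph.edge_vert hw)
  refine SimpleGraph.sSup_adj.2 ⟨q.toSubgraph.spanningCoe,
    ⟨q.toSubgraph.spanningCoe_le, fun v hv ↦ hux ▸ ?_, fun v hv ↦ ?_⟩, q.mem_edges_toSubgraph.2 he⟩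
  · exact SimpleGraph.ConnectedComponent.eq.2 (q.takeUntil v (hsupp v hv)).reachable.symm
  · exact (hq.ncard_neighborSet_toSubgraph_eq_two (hsupp v hv)).ge

theorem two_le_ncard_neighborSet_twoCoreComp [Finite V] (h : (twoCoreComp H c).Adj x y) :
    2 ≤ ((twoCoreComp H c).neighborSet x).ncard := by
  obtain ⟨K, hK, hxy⟩ := SimpleGraph.sSup_adj.1 h
  exact (hK.2.2 x ⟨y, hxy⟩).trans <|
    Set.ncard_le_ncard fun z hz ↦ SimpleGraph.sSup_adj.2 ⟨K, hK, hz⟩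

variable [Fintype V]

theorem extends_twoCoreComp (k : ℕ) (h : (twoCoreComp H c).Adj x y) :
    Extends (twoCoreComp H c) Finset.univ k x y := by
  induction k generalizing x y with
  | zero => trivial
  | succ k ih =>
    obtain ⟨z, hz, hzx⟩ :=
      Set.exists_ne_of_one_lt_ncard (two_le_ncard_neighborSet_twoCoreComp h.symm) x
    exact ⟨z, hzx, hz, Finset.mem_univ _, ih hz⟩

theorem eventA_of_twoCoreComp_adj (hH : (R : ℕ∞) < H.egirth) (h : (twoCoreComp H c).Adj x y) :
    eventA H R x y := by
  cases R with
  | zero => exact Nat.zero_le _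
  | succ R =>
    obtain ⟨u, q, hq, hlen, hx, -⟩ := (extends_twoCoreComp R h).exists_isPath
      (hH.trans_le (SimpleGraph.egirth_anti (twoCoreComp_le c))) le_rfl h
    exact eventA_of_isPath (q := q.mapLe (twoCoreComp_le c)) (by simpa using hq) (by simpa using hx)
      (by simp [hlen])

variable [DecidableEq V]

theorem edgeFinset'_twoCoreComp_subset (hH : (R : ℕ∞) < H.egirth) (c : H.ConnectedComponent) :
    edgeFinset' (twoCoreComp H c) ⊆ E2set H R := by
  intro e he
  rw [mem_edgeFinset'] at he
  refine Finset.mem_filter.2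
    ⟨mem_edgeFinset'.2 (SimpleGraph.edgeSet_mono (twoCoreComp_le c) he), ?_⟩
  induction e using Sym2.ind with
  | _ x y => exact ⟨x, y, rfl, eventA_of_twoCoreComp_adj hH he,
      eventA_of_twoCoreComp_adj hH (SimpleGraph.adj_symm _ he)⟩

theorem card_symmDiff_twoCoreComp_support_le (hH : (R : ℕ∞) < H.egirth)
    (c : H.ConnectedComponent) :
    ((V2set H R) ∆ (Finset.univ.filter (· ∈ (twoCoreComp H c).support))).card ≤
      (E2set H R \ edgeFinset' (twoCoreComp H c)).card * 2 := by
  refine le_trans (Finset.card_le_card fun x hx ↦ ?_) (card_filter_exists_mem_le _)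
  simp only [Finset.mem_symmDiff, V2set, Finset.mem_filter, Finset.mem_univ, true_and] at hx ⊢
  rcases hx with ⟨⟨e, he, hxe⟩, hx⟩ | ⟨⟨y, hxy⟩, hx⟩
  · refine ⟨e, Finset.mem_sdiff.2 ⟨he, fun h ↦ hx ?_⟩, hxe⟩
    obtain ⟨y, rfl⟩ := hxe
    exact ⟨y, mem_edgeFinset'.1 h⟩
  · exact absurd ⟨s(x, y), edgeFinset'_twoCoreComp_subset hH c (mem_edgeFinset'.2 hxy), by simp⟩ hx

end TwoCore

section Pieces

variable {V : Type} [Fintype V] {H K : SimpleGraph V} {S T U : Finset V} {a : ℝ}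
  {k R : ℕ} {x y : V}

/-- `S` is connected in `H` and joined to its complement by at most one edge of `H`; if there is
such an edge, then `S` has at least `k` vertices. The components of `H`, and the two sides of a
bridge of `H` when they have `k` vertices, are pieces. -/
structure IsPiece (H : SimpleGraph V) (k : ℕ) (S : Finset V) : Prop where
  preconnected : (H.induce (S : Set V)).Preconnected
  card_boundary_le : (boundary (edgeFinset' H) S).card ≤ 1
  le_card : (boundary (edgeFinset' H) S).Nonempty → k ≤ S.card

theorem IsPiece.exists_mem_boundary (hS : IsPiece H k S) (hxS : x ∈ S) (hxT : x ∈ T)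
    (hST : ¬ S ⊆ T) : ∃ u ∈ S, ∃ v ∈ S, s(u, v) ∈ boundary (edgeFinset' H) T := by
  obtain ⟨y, hyS, hyT⟩ := Finset.not_subset.1 hST
  obtain ⟨q⟩ := hS.preconnected ⟨x, hxS⟩ ⟨y, hyS⟩
  obtain ⟨a, -, hfst, hsnd⟩ := q.exists_boundary_dart {v | (v : V) ∈ T} hxT hyT
  exact ⟨a.fst, a.fst.2, a.snd, a.snd.2,
    mem_boundary.2 ⟨mem_edgeFinset'.2 a.adj, a.fst, hfst, a.snd, hsnd, rfl⟩⟩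

theorem IsPiece.disjoint {e e' : Sym2 V} (hS : IsPiece H k S) (hS' : IsPiece H k S') (hST : S ⊆ T)
    (hST' : S' ⊆ T) (he : e ∈ boundary (edgeFinset' H) S) (heT : e ∈ boundary (edgeFinset' H) T)
    (he' : e' ∈ boundary (edgeFinset' H) S') (heT' : e' ∈ boundary (edgeFinset' H) T)
    (hne : e ≠ e') : Disjoint S S' := by
  have heq : ∀ f ∈ boundary (edgeFinset' H) S', f = e' := fun f hf ↦
    Finset.card_le_one.1 hS'.card_boundary_le f hf e' he'
  by_contra hdisj
  obtain ⟨z, hz, hz'⟩ := Finset.not_disjoint_iff.1 hdisj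
  by_cases hsub : S ⊆ S'
  · exact hne (heq e (mem_boundary_of_subset_of_subset hsub hST' he heT))
  · obtain ⟨u, hu, v, hv, huv⟩ := hS.exists_mem_boundary hz hz' hsub
    obtain rfl := heq _ huv
    obtain ⟨-, w, -, w', hw', heq⟩ := mem_boundary.1 heT'
    have : w' ∈ s(u, v) := heq ▸ Sym2.mem_mk_right _ _
    rcases Sym2.mem_iff.1 this with rfl | rfl
    exacts [hw' (hST hu), hw' (hST hv)]

theorem mul_card_boundary_biUnion_le [DecidableEq V] {𝒯 : Finset (Finset V)}
    (h𝒯 : ∀ S ∈ 𝒯, IsPiece H k S) :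
    k * (boundary (edgeFinset' H) (𝒯.biUnion id)).card ≤ Fintype.card V := by
  set T := 𝒯.biUnion id
  set B := boundary (edgeFinset' H) T
  have hsub : ∀ S ∈ 𝒯, S ⊆ T := fun S hS ↦ Finset.subset_biUnion_of_mem id hS
  have hpiece : ∀ e ∈ B, ∃ S ∈ 𝒯, e ∈ boundary (edgeFinset' H) S := by
    intro e he
    obtain ⟨heH, x, hx, y, hy, rfl⟩ := mem_boundary.1 he
    obtain ⟨S, hS, hxS⟩ := Finset.mem_biUnion.1 hx
    exact ⟨S, hS, mem_boundary.2 ⟨heH, x, hxS, y, fun h ↦ hy (hsub S hS h), rfl⟩⟩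
  choose! f hf𝒯 hfb using hpiece
  have hdisj : (B : Set (Sym2 V)).PairwiseDisjoint f := fun e he e' he' hne ↦
    (h𝒯 _ (hf𝒯 e he)).disjoint (h𝒯 _ (hf𝒯 e' he')) (hsub _ (hf𝒯 e he)) (hsub _ (hf𝒯 e' he'))
      (hfb e he) he (hfb e' he') he' hne
  calc k * B.card = B.card • k := by rw [smul_eq_mul, mul_comm]
    _ ≤ ∑ e ∈ B, (f e).card :=
        Finset.card_nsmul_le_sum _ _ _ fun e he ↦ (h𝒯 _ (hf𝒯 e he)).le_card ⟨e, hfb e he⟩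
    _ = (B.biUnion f).card := (Finset.card_biUnion hdisj).symm
    _ ≤ Fintype.card V := Finset.card_le_univ _

theorem IsPiece.mul_card_boundary_le (hS : IsPiece H k S) :
    k * (boundary (edgeFinset' H) S).card ≤ Fintype.card V := by
  classical
  simpa using mul_card_boundary_biUnion_le (𝒯 := {S}) (by simpa using hS)

theorem isPiece_compVerts (hK : K ≤ H) (c : K.ConnectedComponent) {B : Finset (Sym2 V)}
    (hB : ∀ e ∈ H.edgeSet, e ∉ K.edgeSet → e ∈ B) (hcard : B.card ≤ 1)
    (hk : B.Nonempty → k ≤ (compVerts K c).card) : IsPiece H k (compVerts K c) := by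
  have hcoe : (compVerts K c : Set V) = c.supp := by
    ext v
    simp [mem_compVerts]
  have hsub : boundary (edgeFinset' H) (compVerts K c) ⊆ B := by
    intro e he
    obtain ⟨heH, x, hx, y, hy, rfl⟩ := mem_boundary.1 he
    refine hB _ (mem_edgeFinset'.1 heH) fun hadj ↦ hy ?_
    rw [mem_compVerts] at hx ⊢
    exact hx ▸ SimpleGraph.ConnectedComponent.connectedComponentMk_eq_of_adj (K.adj_symm hadj)
  refine ⟨?_, (Finset.card_le_card hsub).trans hcard, fun h ↦ hk (h.mono hsub)⟩
  rw [hcoe]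
  exact c.connected_toSimpleGraph.preconnected.mono fun _ _ h ↦ hK h

theorem isPiece_compVerts_self (c : H.ConnectedComponent) : IsPiece H k (compVerts H c) :=
  isPiece_compVerts le_rfl c (B := ∅) (fun _ he h ↦ absurd he h) (by simp) (by simp)

theorem isPiece_compVerts_deleteEdges (e : Sym2 V) (c : (H.deleteEdges {e}).ConnectedComponent)
    (hk : k ≤ (compVerts (H.deleteEdges {e}) c).card) :
    IsPiece H k (compVerts (H.deleteEdges {e}) c) := by
  refine isPiece_compVerts (SimpleGraph.deleteEdges_le _) c (B := {e}) (fun f hf hf' ↦ ?_) (by simp)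
    fun _ ↦ hk
  simpa [SimpleGraph.edgeSet_deleteEdges, hf] using hf'

theorem disjoint_compVerts_of_isBridge (hb : H.IsBridge s(x, y)) :
    Disjoint
      (compVerts (H.deleteEdges {s(x, y)}) ((H.deleteEdges {s(x, y)}).connectedComponentMk x))
      (compVerts (H.deleteEdges {s(x, y)})
        ((H.deleteEdges {s(x, y)}).connectedComponentMk y)) := by
  rw [Finset.disjoint_left]
  intro v hx hy
  exact SimpleGraph.isBridge_iff.1 hb ((mem_compVerts_mk.1 hx).symm.trans (mem_compVerts_mk.1 hy))

variable [DecidableEq V]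

/-- Cutting at most `|V| / k` edges of `F` cannot split `U` into two parts having at least `a`
elements each. -/
def IsUnsplit (F : Finset (Sym2 V)) (k : ℕ) (U : Finset V) (a : ℝ) : Prop :=
  ∀ T : Finset V, k * (boundary F T).card ≤ Fintype.card V →
    ((T ∩ U).card : ℝ) < a ∨ ((U \ T).card : ℝ) < a

/-- The union of all pieces of `H` that meet `U` in fewer than `a` vertices. -/
def smallUnion (H : SimpleGraph V) (k : ℕ) (U : Finset V) (a : ℝ) : Finset V :=
  (Finset.univ.filter fun S ↦ IsPiece H k S ∧ ((S ∩ U).card : ℝ) < a).biUnion id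

theorem IsPiece.subset_smallUnion (hS : IsPiece H k S) (ha : ((S ∩ U).card : ℝ) < a) :
    S ⊆ smallUnion H k U a :=
  Finset.subset_biUnion_of_mem id (by simpa using ⟨hS, ha⟩)

/-- A union of pieces has few boundary edges, so adding pieces one by one never makes the part in
`U` jump from below `a` to above `|U| - a`. -/
theorem IsUnsplit.card_smallUnion_inter_lt (h : IsUnsplit (edgeFinset' H) k U a) (ha : 0 < a)
    (hU : 3 * a ≤ U.card) : ((smallUnion H k U a ∩ U).card : ℝ) < a := by
  suffices ∀ 𝒯 : Finset (Finset V), (∀ S ∈ 𝒯, IsPiece H k S ∧ ((S ∩ U).card : ℝ) < a) →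
      ((𝒯.biUnion id ∩ U).card : ℝ) < a from this _ fun S hS ↦ by simpa using hS
  intro 𝒯
  induction 𝒯 using Finset.induction_on with
  | empty => simpa using ha
  | insert S 𝒯 _ ih =>
    intro h𝒯
    refine (h _ (mul_card_boundary_biUnion_le fun S' hS' ↦ (h𝒯 S' hS').1)).resolve_right
      fun hrest ↦ ?_
    have hS := (h𝒯 S (Finset.mem_insert_self _ _)).2
    have h𝒯' := ih fun S' hS' ↦ h𝒯 S' (Finset.mem_insert_of_mem hS')
    have hcover : U ⊆ ((S ∩ U) ∪ (𝒯.biUnion id ∩ U)) ∪ (U \ (insert S 𝒯).biUnion id) := by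
      intro x hx
      simp only [Finset.mem_union, Finset.mem_inter, Finset.mem_sdiff, Finset.biUnion_insert, id]
      tauto
    have : (U.card : ℝ) ≤ ((S ∩ U).card + (𝒯.biUnion id ∩ U).card) +
        (U \ (insert S 𝒯).biUnion id).card := mod_cast (Finset.card_le_card hcover).trans
      ((Finset.card_union_le _ _).trans (Nat.add_le_add_right (Finset.card_union_le _ _) _))
    linarith

theorem IsUnsplit.card_sdiff_compVerts_lt (h : IsUnsplit (edgeFinset' H) k U a) (ha : 0 < a)
    (hout : ∀ c : H.ConnectedComponent, ((compVerts H c \ U).card : ℝ) ≤ a) (hU : 3 * a ≤ U.card)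
    {c : H.ConnectedComponent} (hc : IsLargestComp H c) :
    ((U \ compVerts H c).card : ℝ) < a := by
  refine (h _ (isPiece_compVerts_self c).mul_card_boundary_le).resolve_left fun hin ↦ ?_
  have hcard : ((compVerts H c).card : ℝ) < 2 * a := by
    have : ((compVerts H c ∩ U).card + (compVerts H c \ U).card : ℝ) = (compVerts H c).card :=
      mod_cast Finset.card_inter_add_card_sdiff _ _
    linarith [hout c]
  have hsmall : ∀ c' : H.ConnectedComponent, ((compVerts H c' ∩ U).card : ℝ) < a := by
    intro c'
    refine (h _ (isPiece_compVerts_self c').mul_card_boundary_le).resolve_right fun hrest ↦ ?_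
    have hle : ((compVerts H c').card : ℝ) ≤ (compVerts H c).card := mod_cast hc c'
    have : (U.card : ℝ) ≤ (U \ compVerts H c').card + (compVerts H c').card :=
      mod_cast Finset.card_le_card_sdiff_add_card
    linarith
  have hsub : U ⊆ smallUnion H k U a ∩ U := fun v hv ↦ Finset.mem_inter.2
    ⟨(isPiece_compVerts_self _).subset_smallUnion (hsmall _) (mem_compVerts.2 rfl), hv⟩
  have : (U.card : ℝ) ≤ (smallUnion H k U a ∩ U).card := mod_cast Finset.card_le_card hsub
  linarith [h.card_smallUnion_inter_lt ha hU]

theorem IsUnsplit.mem_smallUnion_of_isBridge (h : IsUnsplit (edgeFinset' H) k U a) (hkR : k ≤ R)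
    (hb : H.IsBridge s(x, y)) (hxy : eventA H R x y) (hyx : eventA H R y x) :
    x ∈ smallUnion H k U a ∨ y ∈ smallUnion H k U a := by
  unfold eventA at hxy hyx
  rw [Sym2.eq_swap] at hyx
  have hx := isPiece_compVerts_deleteEdges _ _ (hkR.trans hyx)
  have hy := isPiece_compVerts_deleteEdges _ _ (hkR.trans hxy)
  rcases h _ hy.mul_card_boundary_le with hsmall | hrest
  · exact .inr (hy.subset_smallUnion hsmall (mem_compVerts.2 rfl))
  · refine .inl (hx.subset_smallUnion (lt_of_le_of_lt (mod_cast ?_) hrest) (mem_compVerts.2 rfl))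
    refine Finset.card_le_card fun v hv ↦ ?_
    obtain ⟨hvx, hvU⟩ := Finset.mem_inter.1 hv
    exact Finset.mem_sdiff.2 ⟨hvU, Finset.disjoint_left.1 (disjoint_compVerts_of_isBridge hb) hvx⟩

end Pieces

section StrayDarts

variable {V : Type} [Fintype V] [DecidableEq V] {G H : SimpleGraph V} {U : Finset V} {a : ℝ}
  {d k R : ℕ} {x y : V} {c : H.ConnectedComponent}

/-- The darts of `G` that extend by `k` steps along `F` although they end outside `U`. -/
def strayDarts (G : SimpleGraph V) (F : Finset (Sym2 V)) (k : ℕ) (U : Finset V) : Finset G.Dart :=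
  Finset.univ.filter fun a ↦ Extends G F k a.fst a.snd ∧ a.snd ∉ U

theorem card_compVerts_sdiff_le (hd : ∀ v, G.degree v ≤ d) (h2 : ∀ v, 2 ≤ G.degree v)
    (hH : H ≤ G) (U : Finset V) (c : H.ConnectedComponent) :
    (compVerts H c \ U).card ≤ max ((d + 1) ^ k) (strayDarts G (edgeFinset' H) k U).card := by
  rcases lt_or_ge (compVerts H c).card ((d + 1) ^ k) with hlt | hge
  · exact le_max_of_le_left ((Finset.card_le_card Finset.sdiff_subset).trans hlt.le)
  refine le_max_of_le_right <| (Finset.card_le_card fun v hv ↦ ?_).trans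
    (Finset.card_image_le (f := fun a : G.Dart ↦ a.snd))
  obtain ⟨hvc, hvU⟩ := Finset.mem_sdiff.1 hv
  obtain rfl := mem_compVerts.1 hvc
  obtain ⟨u, q, hq, hk⟩ := exists_isPath_le_length
    (fun v ↦ (SimpleGraph.degree_le_of_le hH).trans (hd v)) (by linarith [hd v, h2 v]) hge
  obtain ⟨x, hx, hne⟩ := Finset.exists_mem_ne (s := G.neighborFinset v) (h2 v) q.snd
  exact Finset.mem_image.2 ⟨⟨(x, v), ((G.mem_neighborFinset v x).1 hx).symm⟩, Finset.mem_filter.2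
    ⟨Finset.mem_univ _, extends_of_isPath_of_le hH hq hne.symm hk, hvU⟩, rfl⟩

theorem mem_image_strayDarts (hd : ∀ v, G.degree v ≤ d) (hd0 : 0 < d) (hH : H ≤ G)
    (hR : (d + 1) ^ k ≤ R) (hxy : H.Adj x y) (hA : eventA H R x y) (hy : y ∉ U) :
    s(x, y) ∈ (strayDarts G (edgeFinset' H) k U).image SimpleGraph.Dart.edge :=
  Finset.mem_image.2 ⟨⟨(x, y), hH hxy⟩, Finset.mem_filter.2
    ⟨Finset.mem_univ _, extends_of_eventA hd hd0 hH hR hA, hy⟩, rfl⟩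

theorem E2set_sdiff_subset (hd : ∀ v, G.degree v ≤ d) (hd0 : 0 < d) (hH : H ≤ G)
    (hR : (d + 1) ^ k ≤ R) {W : Finset V}
    (hW : ∀ x ∈ U, ∀ y ∈ U, H.Adj x y → eventA H R x y → eventA H R y x →
      ¬ (twoCoreComp H c).Adj x y → x ∈ W ∨ y ∈ W) :
    E2set H R \ edgeFinset' (twoCoreComp H c) ⊆
      (strayDarts G (edgeFinset' H) k U).image SimpleGraph.Dart.edge ∪
        incident (edgeFinset' H) W := by
  intro e he
  obtain ⟨heE2, hcore⟩ := Finset.mem_sdiff.1 he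
  obtain ⟨heH, x, y, rfl, hxy, hyx⟩ := Finset.mem_filter.1 heE2
  have hadj : H.Adj x y := mem_edgeFinset'.1 heH
  rw [Finset.mem_union]
  by_cases hy : y ∈ U
  · by_cases hx : x ∈ U
    · right
      rcases hW x hx y hy hadj hxy hyx fun h ↦ hcore (mem_edgeFinset'.2 h) with hx | hy
      exacts [mem_incident.2 ⟨heH, x, hx, by simp⟩, mem_incident.2 ⟨heH, y, hy, by simp⟩]
    · left
      rw [Sym2.eq_swap]
      exact mem_image_strayDarts hd hd0 hH hR hadj.symm hyx hx
  · exact .inl (mem_image_strayDarts hd hd0 hH hR hadj hxy hy)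

theorem IsUnsplit.exists_cover (h : IsUnsplit (edgeFinset' H) k U a) (ha : 0 < a)
    (hout : ∀ c : H.ConnectedComponent, ((compVerts H c \ U).card : ℝ) ≤ a) (hkR : k ≤ R)
    (hc : IsLargestComp H c) :
    ∃ W : Finset V, (W.card : ℝ) ≤ 3 * a ∧
      ∀ x ∈ U, ∀ y ∈ U, H.Adj x y → eventA H R x y → eventA H R y x →
        ¬ (twoCoreComp H c).Adj x y → x ∈ W ∨ y ∈ W := by
  rcases lt_or_ge (U.card : ℝ) (3 * a) with hU | hU
  · exact ⟨U, hU.le, fun x hx _ _ _ _ _ _ ↦ .inl hx⟩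
  refine ⟨(smallUnion H k U a ∩ U) ∪ (U \ compVerts H c), ?_, fun x hx y hy hadj hxy hyx hcore ↦ ?_⟩
  · have hunion : (((smallUnion H k U a ∩ U) ∪ (U \ compVerts H c)).card : ℝ) ≤
        (smallUnion H k U a ∩ U).card + (U \ compVerts H c).card :=
      mod_cast Finset.card_union_le _ _
    linarith [h.card_smallUnion_inter_lt ha hU, h.card_sdiff_compVerts_lt ha hout hU hc]
  · simp only [Finset.mem_union, Finset.mem_inter, Finset.mem_sdiff, hx, hy, and_true, true_and]
    by_cases hb : H.IsBridge s(x, y)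
    · exact (h.mem_smallUnion_of_isBridge hkR hb hxy hyx).imp .inl .inl
    · exact .inl <| .inr fun hxc ↦
        hcore (twoCoreComp_adj_of_not_isBridge hadj (mem_compVerts.1 hxc) hb)

theorem IsUnsplit.card_E2set_sdiff_le (h : IsUnsplit (edgeFinset' H) k U a)
    (hd : ∀ v, G.degree v ≤ d) (hd0 : 0 < d) (h2 : ∀ v, 2 ≤ G.degree v) (hH : H ≤ G)
    (hR : (d + 1) ^ k ≤ R) (hka : (d + 1) ^ k ≤ a)
    (hstray : ((strayDarts G (edgeFinset' H) k U).card : ℝ) ≤ a) (hc : IsLargestComp H c) :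
    ((E2set H R \ edgeFinset' (twoCoreComp H c)).card : ℝ) ≤ a + 3 * a * d := by
  have ha : 0 < a := lt_of_lt_of_le (by positivity) hka
  have hout (c : H.ConnectedComponent) : ((compVerts H c \ U).card : ℝ) ≤ a :=
    (Nat.cast_le.2 (card_compVerts_sdiff_le (k := k) hd h2 hH U c)).trans <| by
      push_cast
      exact max_le hka hstray
  have hkR : k ≤ R := (Nat.lt_pow_self (by omega)).le.trans hR
  obtain ⟨W, hWa, hW⟩ := h.exists_cover ha hout hkR hc
  have hcard : ((E2set H R \ edgeFinset' (twoCoreComp H c)).card : ℝ) ≤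
      (strayDarts G (edgeFinset' H) k U).card + W.card * d := mod_cast
    (Finset.card_le_card (E2set_sdiff_subset hd hd0 hH hR hW)).trans <|
      (Finset.card_union_le _ _).trans <| Nat.add_le_add Finset.card_image_le <|
        card_incident_le hd (fun e he ↦ mem_edgeFinset'.2
          (SimpleGraph.edgeSet_mono hH (mem_edgeFinset'.1 he))) W
  have : (W.card : ℝ) * d ≤ 3 * a * d := by gcongr
  linarith

end StrayDarts

section Sprinkling

theorem two_pow_div_le_exp {r : ℕ} {c : ℝ} (hr : Real.log 2 ≤ (r + 1) * c) (n : ℕ) :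
    (2 : ℝ) ^ (n / (r + 1)) ≤ Real.exp (c * n) := by
  rw [← Real.exp_log two_pos, ← Real.exp_nat_mul, Real.exp_le_exp]
  have hc : 0 ≤ c := by
    have := Real.log_pos one_lt_two
    exact (pos_of_mul_pos_right (this.trans_le hr) (by positivity)).le
  have hdiv : ((n / (r + 1) : ℕ) : ℝ) * (r + 1) ≤ n := mod_cast Nat.div_mul_le_self n (r + 1)
  calc ((n / (r + 1) : ℕ) : ℝ) * Real.log 2 ≤ (n / (r + 1) : ℕ) * ((r + 1) * c) := by gcongr
    _ = ((n / (r + 1) : ℕ) * (r + 1)) * c := by ring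
    _ ≤ n * c := by gcongr
    _ = c * n := mul_comm _ _

theorem prob_not_isUnsplit_le {V : Type} [Fintype V] [DecidableEq V] {G : SimpleGraph V}
    {s : Finset (Sym2 V)} {d k r : ℕ} {c δ η κ : ℝ} (hd : ∀ v, G.degree v ≤ d)
    (hs : s ⊆ edgeFinset' G) (hδ0 : 0 ≤ δ) (hδ1 : δ ≤ 1) (hk : 0 < k)
    (hr : Real.log 2 ≤ (r + 1) * c) (hη : 2 * (d + 1) ^ (2 * r) / k ≤ η / 2)
    (hκ : (1 + 2 * (d + 1) ^ (2 * r) * d) / k < κ) (hV : 0 < Fintype.card V)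
    (hcut : ∀ A B : Finset V, Disjoint B A → η / 2 * Fintype.card V ≤ A.card →
      η / 2 * Fintype.card V ≤ B.card → prob (edgeFinset' G) δ (fun t ↦ ∃ S : Finset V, A ⊆ S ∧
        Disjoint B S ∧ ((boundary t S).card : ℝ) < κ * Fintype.card V) ≤
          Real.exp (-(2 * c * Fintype.card V))) :
    prob (edgeFinset' G) δ (fun t ↦
      ¬ IsUnsplit (s ∪ t) k (thickSet s r) (η * Fintype.card V)) ≤
        Real.exp (-(c * Fintype.card V)) := by
  have hV' : (0 : ℝ) < Fintype.card V := mod_cast hV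
  have hk' : (0 : ℝ) < k := mod_cast hk
  obtain ⟨𝒜, h𝒜card, h𝒜⟩ := exists_approx_family hd hs r
  set n : ℝ := (Fintype.card V : ℝ) with hn
  set 𝒜' := 𝒜.filter fun A ↦ η / 2 * n ≤ A.card ∧ η / 2 * n ≤ (thickSet s r \ A).card
  have separated : prob (edgeFinset' G) δ (fun t ↦
      ¬ IsUnsplit (s ∪ t) k (thickSet s r) (η * n)) ≤
      prob (edgeFinset' G) δ (fun t ↦ ∃ A ∈ 𝒜', ∃ S : Finset V, A ⊆ S ∧
        Disjoint (thickSet s r \ A) S ∧ ((boundary t S).card : ℝ) < κ * n) := by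
    refine prob_mono hδ0 hδ1 fun t ht hsplit ↦ ?_
    by_contra! hsep
    refine hsplit fun T hT ↦ card_inter_lt_or_card_sdiff_lt hd ht (β := n / k) h𝒜 ?_ ?_
      (fun A hA hA1 hA2 ↦ hsep A (Finset.mem_filter.2 ⟨hA, hA1, hA2⟩)) ?_
    · calc n / k * 2 * (d + 1) ^ (2 * r) = 2 * (d + 1) ^ (2 * r) / k * n := by ring
        _ ≤ η / 2 * n := by gcongr
    · calc n / k + n / k * 2 * (d + 1) ^ (2 * r) * d
          = (1 + 2 * (d + 1) ^ (2 * r) * d) / k * n := by ring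
        _ < κ * n := by gcongr
    · rw [le_div_iff₀' hk', hn]
      exact_mod_cast hT
  calc _ ≤ _ := separated
    _ ≤ _ := prob_exists_le hδ0 hδ1 _ _
    _ ≤ 𝒜'.card • Real.exp (-(2 * c * n)) := Finset.sum_le_card_nsmul _ _ _ fun A hA ↦
        hcut A _ Finset.sdiff_disjoint (Finset.mem_filter.1 hA).2.1 (Finset.mem_filter.1 hA).2.2
    _ ≤ Real.exp (c * n) * Real.exp (-(2 * c * n)) := by
        rw [nsmul_eq_mul]
        gcongr
        refine le_trans ?_ (two_pow_div_le_exp hr (Fintype.card V))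
        exact_mod_cast (Finset.card_filter_le _ _).trans h𝒜card
    _ = Real.exp (-(c * n)) := by rw [← Real.exp_add]; congr 1; ring

theorem exists_prob_not_isUnsplit_le {b : ℝ} (hb : 0 < b) {d : ℕ} (hd : 0 < d) {η δ : ℝ}
    (hη : 0 < η) (hδ0 : 0 < δ) (hδ1 : δ ≤ 1) :
    ∃ r k₀ : ℕ, ∃ c > 0, ∀ k ≥ k₀, ∀ (V : Type) [Fintype V] [DecidableEq V]
      (G : SimpleGraph V), IsExpander G b d → 0 < Fintype.card V → ∀ s ⊆ edgeFinset' G,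
        prob (edgeFinset' G) δ (fun t ↦
          ¬ IsUnsplit (s ∪ t) k (thickSet s r) (η * Fintype.card V)) ≤
            Real.exp (-(c * Fintype.card V)) := by
  obtain ⟨κ, hκ, c₀, hc₀, hcut⟩ := exists_prob_boundary_lt_le hb hd (half_pos hη) hδ0 hδ1
  obtain ⟨r, hr⟩ := exists_nat_ge (Real.log 2 / (c₀ / 2))
  rw [div_le_iff₀ (by positivity)] at hr
  set M : ℝ := 2 * (d + 1) ^ (2 * r)
  obtain ⟨k₀, hk₀⟩ := exists_nat_gt (max (M / (η / 2)) ((1 + M * d) / κ))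
  obtain ⟨hkη, hkκ⟩ := max_lt_iff.1 hk₀
  have hk₀pos : (0 : ℝ) < k₀ := lt_of_le_of_lt (by positivity) hkκ
  refine ⟨r, k₀, c₀ / 2, half_pos hc₀, fun k hk V _ _ G hG hV s hs ↦ ?_⟩
  have hkk : (k₀ : ℝ) ≤ k := mod_cast hk
  have hk0 : (0 : ℝ) < k := hk₀pos.trans_le hkk
  refine prob_not_isUnsplit_le hG.degree_le hs hδ0.le hδ1 (mod_cast hk0) (by linarith)
    ((div_le_comm₀ (half_pos hη) hk0).1 (hkη.le.trans hkk))
    ((div_lt_comm₀ hκ hk0).1 (hkκ.trans_le hkk)) hV fun A B hAB hA hB ↦ ?_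
  rw [mul_div_cancel₀ c₀ two_ne_zero]
  exact hcut V G hG hV A B hAB hA hB

variable {V : Type} [Fintype V] {G H : SimpleGraph V} {F s t : Finset (Sym2 V)}
  {d k m r N R : ℕ} {η p : ℝ}

theorem Extends.of_le {V : Type*} {G : SimpleGraph V} {s : Finset (Sym2 V)} {x y : V}
    (hrk : r ≤ k) (h : Extends G s k x y) : Extends G s r x y := by
  induction r generalizing k x y with
  | zero => trivial
  | succ r ih =>
    obtain ⟨k, rfl⟩ := Nat.exists_eq_add_of_le' (r.succ_pos.trans_le hrk)
    obtain ⟨z, hzx, hyz, hs, h⟩ := h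
    exact ⟨z, hzx, hyz, hs, ih (by omega) h⟩

theorem card_strayDarts_le [DecidableEq V] (hG : (N : ℕ∞) < G.egirth) (hst : s ⊆ t) (hrk : r ≤ k)
    (hr : r + 1 ≤ N) :
    ((strayDarts G t k (thickSet s r)).card : ℝ) ≤ extendCount G k t - extendCount G k s := by
  rw [strayDarts, Finset.card_filter, extendCount, extendCount, ← Finset.sum_sub_distrib]
  push_cast
  refine Finset.sum_le_sum fun a _ ↦ ?_
  by_cases hs : Extends G s k a.fst a.snd
  · simp [hs, hs.mono hst, (hs.of_le hrk).mem_thickSet hG hr a.adj]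
  · by_cases ht : Extends G t k a.fst a.snd
    · simp only [hs, ht, if_true, if_false, true_and, sub_zero]
      split_ifs <;> norm_num
    · simp [hs, ht]

theorem card_dart (hG : G.IsRegularOfDegree d) :
    Fintype.card G.Dart = Fintype.card V * d := by
  rw [SimpleGraph.dart_card_eq_sum_degrees, Finset.sum_congr rfl fun v _ ↦ hG v]
  simp

theorem prob_add_le_extendCount_le (hG : (N : ℕ∞) < G.egirth) (hm : G.IsRegularOfDegree (m + 1))
    (h0 : 0 ≤ p) (h1 : p ≤ 1) (hk : 2 * (k + 1) ≤ N) (hV : 0 < Fintype.card V) (hη : 0 ≤ η) :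
    prob (edgeFinset' G) p (fun s ↦ Fintype.card G.Dart * survival m p k + η * Fintype.card V ≤
      extendCount G k s) ≤
        Real.exp (-(η ^ 2 / (4 * (influence (m + 1) k + 1) ^ 2 * (m + 1)) * Fintype.card V)) := by
  have : (0 : ℝ) < Fintype.card V := mod_cast hV
  have hd (v : V) : G.degree v ≤ m + 1 := (hm v).le
  have htail := HasBoundedDifferences.prob_expect_add_le (L := influence (m + 1) k + 1)
    (fun s a ↦ (hasBoundedDifferences_extendCount hd k s a).trans (by simp)) h0 h1
    (by positivity) (m := Fintype.card V * (m + 1)) (x := η * Fintype.card V) (by positivity)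
    (mod_cast card_edgeFinset'_le hd) (by positivity)
  rw [expect_extendCount hG hm p hk] at htail
  convert htail using 3
  field_simp

theorem prob_extendCount_le_sub_le (hG : (N : ℕ∞) < G.egirth) (hm : G.IsRegularOfDegree (m + 1))
    (h0 : 0 ≤ p) (h1 : p ≤ 1) (hk : 2 * (k + 1) ≤ N) (hV : 0 < Fintype.card V) (hη : 0 ≤ η) :
    prob (edgeFinset' G) p (fun s ↦ extendCount G k s ≤
      Fintype.card G.Dart * survival m p k - η * Fintype.card V) ≤
        Real.exp (-(η ^ 2 / (4 * (influence (m + 1) k + 1) ^ 2 * (m + 1)) * Fintype.card V)) := by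
  have : (0 : ℝ) < Fintype.card V := mod_cast hV
  have hd (v : V) : G.degree v ≤ m + 1 := (hm v).le
  have htail := HasBoundedDifferences.prob_le_expect_sub (L := influence (m + 1) k + 1)
    (fun s a ↦ (hasBoundedDifferences_extendCount hd k s a).trans (by simp)) h0 h1
    (by positivity) (m := Fintype.card V * (m + 1)) (x := η * Fintype.card V) (by positivity)
    (mod_cast card_edgeFinset'_le hd) (by positivity)
  rw [expect_extendCount hG hm p hk] at htail
  convert htail using 3
  field_simp

theorem fromEdgeSet_le_of_subset_edgeFinset' (hF : F ⊆ edgeFinset' G) :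
    SimpleGraph.fromEdgeSet (F : Set (Sym2 V)) ≤ G := fun _ _ h ↦
  mem_edgeFinset'.1 (hF ((SimpleGraph.fromEdgeSet_adj _).1 h).1)

theorem edgeFinset'_fromEdgeSet (hF : F ⊆ edgeFinset' G) :
    edgeFinset' (SimpleGraph.fromEdgeSet (F : Set (Sym2 V))) = F := by
  ext e
  rw [mem_edgeFinset', SimpleGraph.edgeSet_fromEdgeSet]
  exact ⟨fun h ↦ h.1, fun h ↦ ⟨h, G.not_isDiag_of_mem_edgeSet (mem_edgeFinset'.1 (hF h))⟩⟩

theorem percProb_mono (h0 : 0 ≤ p) (h1 : p ≤ 1) {P Q : SimpleGraph V → Prop}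
    (h : ∀ H ≤ G, P H → Q H) : percProb G p P ≤ percProb G p Q :=
  prob_mono (E := edgeFinset' G) (P := fun F ↦ P (SimpleGraph.fromEdgeSet ↑F))
    (Q := fun F ↦ Q (SimpleGraph.fromEdgeSet ↑F)) h0 h1
    fun _ hF ↦ h _ (fromEdgeSet_le_of_subset_edgeFinset' hF)

theorem IsUnsplit.card_E2set_sdiff_le_of_extendCount [DecidableEq V] {a : ℝ}
    (h : IsUnsplit (edgeFinset' H) k (thickSet s r) a) (hG : (N : ℕ∞) < G.egirth)
    (hd : G.IsRegularOfDegree d) (hd2 : 2 ≤ d) (hH : H ≤ G) (hs : s ⊆ edgeFinset' H) (hrk : r ≤ k)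
    (hr : r + 1 ≤ N) (hR : (d + 1) ^ k ≤ R) (hka : (d + 1) ^ k ≤ a)
    (hcount : extendCount G k (edgeFinset' H) - extendCount G k s ≤ a)
    {c : H.ConnectedComponent} (hc : IsLargestComp H c) :
    ((E2set H R \ edgeFinset' (twoCoreComp H c)).card : ℝ) ≤ a + 3 * a * d :=
  h.card_E2set_sdiff_le (fun v ↦ (hd v).le) (by omega) (fun v ↦ hd2.trans (hd v).ge) hH hR hka
    ((card_strayDarts_le hG hs hrk hr).trans hcount) hc

theorem prob_add_sub_mul_le_of_tails {α : Type*} [DecidableEq α] {E : Finset α}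
    {P : Finset α → Prop} {S : Finset α → Finset α → Prop} {f : Finset α → ℝ}
    {q lo hi u v w : ℝ} (hp0 : 0 ≤ p) (hp1 : p ≤ 1) (hq0 : 0 ≤ q) (hq1 : q ≤ 1) (hw : 0 ≤ w)
    (hhi : prob E (p + q - p * q) (fun s ↦ hi ≤ f s) ≤ u) (hlo : prob E p (fun s ↦ f s ≤ lo) ≤ v)
    (hS : ∀ s ⊆ E, prob E q (S s) ≤ w)
    (h : ∀ s ⊆ E, ∀ t ⊆ E, lo < f s → f (s ∪ t) < hi → P (s ∪ t) → S s t) :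
    prob E (p + q - p * q) P ≤ u + (v + w) := by
  have hpq0 : 0 ≤ p + q - p * q := by nlinarith
  have hpq1 : p + q - p * q ≤ 1 := by nlinarith
  have sprinkled : prob E (p + q - p * q) (fun s ↦ P s ∧ f s < hi) ≤ v + w :=
    prob_add_sub_mul_le hp0 hp1 hq0 hq1 hw hlo fun s hs hslo ↦
      (prob_mono hq0 hq1 fun t ht hP ↦ h s hs t ht (not_le.1 hslo) hP.2 hP.1).trans (hS s hs)
  calc prob E (p + q - p * q) P
      ≤ prob E (p + q - p * q) (fun s ↦ hi ≤ f s ∨ P s ∧ f s < hi) :=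
        prob_mono hpq0 hpq1 fun s _ hs ↦ (le_or_gt hi _).imp_right fun h ↦ ⟨hs, h⟩
    _ ≤ u + (v + w) := (prob_or_le hpq0 hpq1 _ _).trans (add_le_add hhi sprinkled)

/-- Percolation at `p + q - p * q` is percolation at `p`, sprinkled with percolation at `q`. If the
first stage already has almost the final number of extending darts, then few darts are stray. -/
theorem percProb_E2set_sdiff_le [DecidableEq V] (hG : (N : ℕ∞) < G.egirth)
    (hd : G.IsRegularOfDegree d) (hd2 : 2 ≤ d) {q a lo hi u v w : ℝ} (hp0 : 0 ≤ p) (hp1 : p ≤ 1)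
    (hq0 : 0 ≤ q) (hq1 : q ≤ 1) (hrk : r ≤ k) (hr : r + 1 ≤ N) (hR : (d + 1) ^ k ≤ R)
    (hka : (d + 1) ^ k ≤ a) (hw : 0 ≤ w) (hgap : hi - lo ≤ a)
    (hhi : prob (edgeFinset' G) (p + q - p * q) (fun s ↦ hi ≤ extendCount G k s) ≤ u)
    (hlo : prob (edgeFinset' G) p (fun s ↦ extendCount G k s ≤ lo) ≤ v)
    (hunsplit : ∀ s ⊆ edgeFinset' G, prob (edgeFinset' G) q (fun t ↦
      ¬ IsUnsplit (s ∪ t) k (thickSet s r) a) ≤ w) :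
    percProb G (p + q - p * q) (fun H ↦ ∃ c : H.ConnectedComponent, IsLargestComp H c ∧
      a + 3 * a * d < ((E2set H R \ edgeFinset' (twoCoreComp H c)).card : ℝ)) ≤ u + (v + w) := by
  refine prob_add_sub_mul_le_of_tails hp0 hp1 hq0 hq1 hw hhi hlo hunsplit ?_
  rintro s hs t ht hslo hsthi ⟨c, hc, hlt⟩ h
  have hst := Finset.union_subset hs ht
  have hE := edgeFinset'_fromEdgeSet hst
  refine hlt.not_ge (IsUnsplit.card_E2set_sdiff_le_of_extendCount (by rwa [hE]) hG hd hd2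
    (fromEdgeSet_le_of_subset_edgeFinset' hst) (Finset.subset_union_left.trans hE.ge) hrk hr hR hka
    ?_ hc)
  rw [hE]
  linarith

theorem percProb_E2set_sdiff_le_three_mul_exp [DecidableEq V] (hG : (N : ℕ∞) < G.egirth)
    (hd : G.IsRegularOfDegree (m + 1)) (hm : 1 ≤ m) (hV : 0 < Fintype.card V) {q c : ℝ}
    (hp0 : 0 ≤ p) (hp1 : p ≤ 1) (hq0 : 0 ≤ q) (hq1 : q ≤ 1) (hη : 0 ≤ η)
    (hrk : r ≤ k) (hr : r + 1 ≤ N) (hk : 2 * (k + 1) ≤ N) (hR : (m + 2) ^ k ≤ R)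
    (hka : (m + 2) ^ k ≤ η * Fintype.card V)
    (hc : c ≤ (η / 3) ^ 2 / (4 * (influence (m + 1) k + 1) ^ 2 * (m + 1)))
    (hsurv : survival m (p + q - p * q) k - survival m p k ≤ η / 3 / (m + 1))
    (hunsplit : ∀ s ⊆ edgeFinset' G, prob (edgeFinset' G) q (fun t ↦
      ¬ IsUnsplit (s ∪ t) k (thickSet s r) (η * Fintype.card V)) ≤
        Real.exp (-(c * Fintype.card V))) :
    percProb G (p + q - p * q) (fun H ↦ ∃ c : H.ConnectedComponent, IsLargestComp H c ∧
      η * (3 * m + 4) * Fintype.card V <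
        ((E2set H R \ edgeFinset' (twoCoreComp H c)).card : ℝ)) ≤
      3 * Real.exp (-(c * Fintype.card V)) := by
  have hrate : Real.exp (-((η / 3) ^ 2 / (4 * (influence (m + 1) k + 1) ^ 2 * (m + 1)) *
      Fintype.card V)) ≤ Real.exp (-(c * Fintype.card V)) := by gcongr
  have hdarts : (Fintype.card G.Dart : ℝ) = Fintype.card V * (m + 1) := mod_cast card_dart hd
  have hgap : Fintype.card G.Dart *
      (survival m (p + q - p * q) k - survival m p k) ≤ η / 3 * Fintype.card V := by
    calc _ ≤ Fintype.card V * (m + 1) * (η / 3 / (m + 1)) := by rw [hdarts]; gcongr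
      _ = η / 3 * Fintype.card V := by field_simp
  have h := percProb_E2set_sdiff_le hG hd (by omega) hp0 hp1 hq0 hq1 hrk hr hR
    (by rw [Nat.cast_add_one, add_assoc, one_add_one_eq_two]; exact hka) (Real.exp_nonneg _)
    (by linarith)
    ((prob_add_le_extendCount_le hG hd (by nlinarith) (by nlinarith) hk hV (by positivity)).trans
      hrate)
    ((prob_extendCount_le_sub_le hG hd hp0 hp1 hk hV (η := η / 3) (by positivity)).trans hrate)
    hunsplit
  push_cast at h
  rw [show η * Fintype.card V + 3 * (η * Fintype.card V) * ((m : ℝ) + 1) =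
    η * (3 * m + 4) * Fintype.card V by ring] at h
  linarith

theorem IsRegularExpander.isRegularOfDegree [DecidableEq V] {b : ℝ} (h : IsRegularExpander G b d) :
    G.IsRegularOfDegree d := fun v ↦ by
  rw [← h.2 v, ← G.card_neighborFinset_eq_degree, ← Set.ncard_coe_finset, G.coe_neighborFinset]

theorem lt_egirth_of_lt_girth {V : Type*} {G : SimpleGraph V} (h : (N : ℕ∞) < G.girth) :
    (N : ℕ∞) < G.egirth :=
  h.trans_le (ENat.natCast_toNat_le_self _)

theorem lt_card_of_lt_girth (h : (N : ℕ∞) < G.girth) : N < Fintype.card V := by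
  have hN : N < G.girth := mod_cast h
  have hcyclic : ¬ G.IsAcyclic := fun hG ↦ by simp [hG.girth_eq_zero] at hN
  obtain ⟨v, c, hc, hlen⟩ := SimpleGraph.exists_girth_eq_length.2 hcyclic
  have := hc.support_nodup.length_le_card
  rw [List.length_tail, SimpleGraph.Walk.length_support] at this
  omega

theorem three_mul_exp_neg_le {x : ℝ} (hx : 4 ≤ x) : 3 * Real.exp (-x) ≤ Real.exp (-(x / 2)) := by
  have h3 : (3 : ℝ) ≤ Real.exp (x / 2) := by linarith [Real.add_one_le_exp (x / 2)]
  calc 3 * Real.exp (-x) ≤ Real.exp (x / 2) * Real.exp (-x) := by gcongr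
    _ = Real.exp (-(x / 2)) := by rw [← Real.exp_add]; congr 1; ring

theorem exists_add_sub_mul_eq {p' p : ℝ} (hp' : p' < p) (hp : p ≤ 1) :
    ∃ δ, 0 < δ ∧ δ ≤ 1 ∧ p' + δ - p' * δ = p := by
  have hpos : 0 < 1 - p' := by linarith
  refine ⟨(p - p') / (1 - p'), div_pos (by linarith) hpos, (div_le_one hpos).2 (by linarith), ?_⟩
  field_simp
  ring

theorem exists_percProb_E2set_sdiff_le {d : ℕ} (hd : 3 ≤ d) {p : ℝ}
    (hp : 1 / ((d : ℝ) - 1) < p) (hp1 : p < 1) {ε b : ℝ} (hε : 0 < ε) (hb : 0 < b) :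
    ∃ R : ℕ, 0 < R ∧ ∃ c > (0 : ℝ), ∀ (V : Type) [Fintype V] [DecidableEq V] (G : SimpleGraph V),
      IsRegularExpander G b d → ((2 * R : ℕ) : ℕ∞) < G.girth →
        percProb G p (fun H ↦ ∃ c : H.ConnectedComponent, IsLargestComp H c ∧
          ε * Fintype.card V < ((E2set H R \ edgeFinset' (twoCoreComp H c)).card : ℝ)) ≤
          Real.exp (-c * Fintype.card V) := by
  obtain ⟨m, rfl⟩ := Nat.exists_eq_add_of_le' (show 1 ≤ d by omega)
  have hm : 2 ≤ m := by omega
  have hmp : 1 < m * p := by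
    rwa [Nat.cast_add_one, add_sub_cancel_right, div_lt_iff₀' (by positivity)] at hp
  obtain ⟨η, hη, rfl⟩ : ∃ η, 0 < η ∧ ε = η * (3 * m + 4) :=
    ⟨ε / (3 * m + 4), by positivity, by field_simp⟩
  obtain ⟨p', hp'0, hp'p, hsurv⟩ :=
    exists_lt_forall_survival_sub_le hm hmp hp1 (ε := η / 3 / (m + 1)) (by positivity)
  obtain ⟨δ, hδ0, hδ1, rfl⟩ := exists_add_sub_mul_eq hp'p hp1.le
  obtain ⟨r, k₀, c₀, hc₀, hunsplit⟩ :=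
    exists_prob_not_isUnsplit_le hb (d := m + 1) (by omega) hη hδ0 hδ1
  obtain ⟨k, hk₀k, hrk⟩ : ∃ k, k₀ ≤ k ∧ r ≤ k := ⟨max k₀ r, le_max_left _ _, le_max_right _ _⟩
  obtain ⟨c, hc0, hcc₀, hc⟩ : ∃ c, 0 < c ∧ c ≤ c₀ ∧
      c ≤ (η / 3) ^ 2 / (4 * (influence (m + 1) k + 1) ^ 2 * (m + 1)) :=
    ⟨min c₀ _, lt_min hc₀ (by positivity), min_le_left _ _, min_le_right _ _⟩
  obtain ⟨R, hR⟩ := exists_nat_ge (max ((m + 2 : ℝ) ^ k) (max ((m + 2) ^ k / η) (4 / c)))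
  simp only [max_le_iff] at hR
  obtain ⟨hR, hRη, hRc⟩ := hR
  have hkR : (m + 2) ^ k ≤ R := mod_cast hR
  have hk : k + 1 ≤ R := (Nat.lt_pow_self (by omega)).trans_le hkR
  refine ⟨R, k.succ_pos.trans_le hk, c / 2, half_pos hc0, fun V _ _ G hG hgirth ↦ ?_⟩
  have hRn : (R : ℝ) ≤ Fintype.card V := by
    have := lt_card_of_lt_girth hgirth
    exact_mod_cast (by omega : R ≤ Fintype.card V)
  have hV : 0 < Fintype.card V := by have := lt_card_of_lt_girth hgirth; omega
  have hunsplit' : ∀ s ⊆ edgeFinset' G, prob (edgeFinset' G) δ (fun t ↦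
      ¬ IsUnsplit (s ∪ t) k (thickSet s r) (η * Fintype.card V)) ≤
        Real.exp (-(c * Fintype.card V)) :=
    fun s hs ↦ (hunsplit k hk₀k V G hG.1 hV s hs).trans (by gcongr)
  refine (percProb_E2set_sdiff_le_three_mul_exp (lt_egirth_of_lt_girth hgirth)
    hG.isRegularOfDegree (by omega) hV hp'0.le (hp'p.le.trans hp1.le) hδ0.le hδ1 hη.le hrk
    (by omega) (by omega) hkR ((div_le_iff₀' hη).1 (hRη.trans hRn)) hc (hsurv k) hunsplit').trans ?_
  rw [neg_mul, div_mul_eq_mul_div]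
  exact three_mul_exp_neg_le ((div_le_iff₀' hc0).1 (hRc.trans hRn))

end Sprinkling

theorem E2_V2_approximate_two_core (d : ℕ) (hd : 3 ≤ d) (p : ℝ)
    (hp : 1 / ((d : ℝ) - 1) < p) (hp1 : p < 1)
    (ε b : ℝ) (hε : 0 < ε) (hb : 0 < b) :
    ∃ R : ℕ, 0 < R ∧ ∃ c > (0:ℝ),
      ∀ (V : Type) [Fintype V] [DecidableEq V] (G : SimpleGraph V),
        IsRegularExpander G b d → ((2 * R : ℕ) : ℕ∞) < G.girth →
        percProb G p (fun H =>
            ∃ c₁ : H.ConnectedComponent, IsLargestComp H c₁ ∧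
              ε * Fintype.card V <
                (((E2set H R) ∆ (edgeFinset' (twoCoreComp H c₁))).card : ℝ))
          ≤ Real.exp (-c * Fintype.card V) ∧
        percProb G p (fun H =>
            ∃ c₁ : H.ConnectedComponent, IsLargestComp H c₁ ∧
              ε * Fintype.card V <
                (((V2set H R) ∆
                    (Finset.univ.filter (· ∈ (twoCoreComp H c₁).support))).card : ℝ))
          ≤ Real.exp (-c * Fintype.card V) := by
  obtain ⟨R, hR, c, hc, h⟩ := exists_percProb_E2set_sdiff_le hd hp hp1 (half_pos hε) hb
  have hp0 : 0 ≤ p := by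
    have : (3 : ℝ) ≤ d := mod_cast hd
    exact (one_div_nonneg.2 (by linarith)).trans hp.le
  refine ⟨R, hR, c, hc, fun V _ _ G hG hgirth ↦ ?_⟩
  have hegirth (H) (hH : H ≤ G) : (R : ℕ∞) < H.egirth :=
    (lt_egirth_of_lt_girth (hgirth.trans_le' (by norm_cast; omega))).trans_le
      (SimpleGraph.egirth_anti hH)
  refine ⟨(percProb_mono hp0 hp1.le ?_).trans (h V G hG hgirth),
    (percProb_mono hp0 hp1.le ?_).trans (h V G hG hgirth)⟩
  · rintro H hH ⟨c₁, hc₁, hlt⟩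
    refine ⟨c₁, hc₁, ?_⟩
    rw [symmDiff_of_ge (edgeFinset'_twoCoreComp_subset (hegirth H hH) c₁)] at hlt
    nlinarith [show (0 : ℝ) ≤ Fintype.card V by positivity]
  · rintro H hH ⟨c₁, hc₁, hlt⟩
    have := hlt.trans_le (Nat.cast_le.2 (card_symmDiff_twoCoreComp_support_le (hegirth H hH) c₁))
    push_cast at this
    exact ⟨c₁, hc₁, by linarith⟩

end Percolation

end
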